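/- (Lemma 2.1, local uniformity.) Let K ⊆ U be compact, T₀ ∈ ℝ, and suppose z₀ ∈ (1,∞)×K×ℝ×ℝ^{n-1} is an initial condition (at time T₀) whose backward solution of the Hamiltonian system stays in (1,∞)×K×ℝ×ℝ^{n-1} for all t ≤ T₀, has energy p₀ > 0, and satisfies r(t) → ∞ as t → −∞. Then there exist a neighborhood V of z₀ and a constant C > 0 such that for every initial condition z ∈ V, the backward solution with z(T₀) = z exists for all t ≤ T₀ and satisfies r(t;z) > C^{-1}|t| − C for all t < −C; in particular r(t;z) → ∞ as t → −∞ for all z ∈ V. -/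

import Mathlib

open Real Set Filter Topology

namespace Scattering

/-- The Euclidean norm of a vector in `Fin m → ℝ`. -/
noncomputable def eNorm {m : ℕ} (v : Fin m → ℝ) : ℝ := Real.sqrt (∑ j, v j ^ 2)

/-- Partial derivative in the radial variable of a function of `(r, θ)`. -/
noncomputable def pderivR {m : ℕ} (f : ℝ → (Fin m → ℝ) → ℝ) : ℝ → (Fin m → ℝ) → ℝ :=
  fun r θ => deriv (fun s => f s θ) r

/-- Partial derivative in the `j`-th angular variable of a function of `(r, θ)`. -/
noncomputable def pderivTheta {m : ℕ} (j : Fin m) (f : ℝ → (Fin m → ℝ) → ℝ) :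
    ℝ → (Fin m → ℝ) → ℝ :=
  fun r θ => fderiv ℝ (f r) θ (Pi.single j 1)

/-- Iterated angular derivatives `∂_θ^α` for a multi-index `α` (a list of directions). -/
noncomputable def thetaDerivs {m : ℕ} (α : List (Fin m)) (f : ℝ → (Fin m → ℝ) → ℝ) :
    ℝ → (Fin m → ℝ) → ℝ :=
  α.foldr pderivTheta f

/-- `DecayOn f ν S K` : for all `k, α` there is `C > 0` with
`|∂_r^k ∂_θ^α f(r,θ)| ≤ C r^{-ν-k}` for `r ∈ (S,∞)`, `θ ∈ K`. -/
def DecayOn {m : ℕ} (f : ℝ → (Fin m → ℝ) → ℝ) (ν S : ℝ) (K : Set (Fin m → ℝ)) : Prop :=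
  ∀ (k : ℕ) (α : List (Fin m)), ∃ C > 0, ∀ r ∈ Ioi S, ∀ θ ∈ K,
    |(pderivR (m := m))^[k] (thetaDerivs α f) r θ| ≤ C * r ^ (-ν - (k : ℝ))

/-- The classical kinetic energy function
`p(r,θ,ρ,ω) = ρ² + r⁻²Σ h^{jk} ω_j ω_k + a₀ ρ² + r⁻¹ Σ a₁^j ρ ω_j + r⁻² Σ a₂^{jk} ω_j ω_k`. -/
noncomputable def energy {m : ℕ} (hM : (Fin m → ℝ) → Matrix (Fin m) (Fin m) ℝ)
    (a0 : ℝ → (Fin m → ℝ) → ℝ) (a1 : ℝ → (Fin m → ℝ) → Fin m → ℝ)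
    (a2 : ℝ → (Fin m → ℝ) → Matrix (Fin m) (Fin m) ℝ) :
    ℝ → (Fin m → ℝ) → ℝ → (Fin m → ℝ) → ℝ :=
  fun r θ ρ ω =>
    ρ ^ 2 + (∑ j, ∑ k, hM θ j k * ω j * ω k) / r ^ 2 + a0 r θ * ρ ^ 2
      + (∑ j, a1 r θ j * ρ * ω j) / r + (∑ j, ∑ k, a2 r θ j k * ω j * ω k) / r ^ 2

section PhaseDerivs

variable {m : ℕ} (p : ℝ → (Fin m → ℝ) → ℝ → (Fin m → ℝ) → ℝ)

/-- `∂p/∂r`. -/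
noncomputable def pdR (r : ℝ) (θ : Fin m → ℝ) (ρ : ℝ) (ω : Fin m → ℝ) : ℝ :=
  deriv (fun s => p s θ ρ ω) r

/-- `∂p/∂θ_j`. -/
noncomputable def pdTheta (j : Fin m) (r : ℝ) (θ : Fin m → ℝ) (ρ : ℝ) (ω : Fin m → ℝ) : ℝ :=
  fderiv ℝ (fun θ' => p r θ' ρ ω) θ (Pi.single j 1)

/-- `∂p/∂ρ`. -/
noncomputable def pdRho (r : ℝ) (θ : Fin m → ℝ) (ρ : ℝ) (ω : Fin m → ℝ) : ℝ :=
  deriv (fun s => p r θ s ω) ρ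

/-- `∂p/∂ω_j`. -/
noncomputable def pdOmega (j : Fin m) (r : ℝ) (θ : Fin m → ℝ) (ρ : ℝ) (ω : Fin m → ℝ) : ℝ :=
  fderiv ℝ (fun ω' => p r θ ρ ω') ω (Pi.single j 1)

/-- `(r,θ,ρ,ω)` solves the Hamiltonian system
`ṙ = ∂p/∂ρ, θ̇ = ∂p/∂ω, ρ̇ = -∂p/∂r, ω̇ = -∂p/∂θ` on the set `I` of times. -/
def IsHamSolOn (r : ℝ → ℝ) (θ : ℝ → Fin m → ℝ) (ρ : ℝ → ℝ) (ω : ℝ → Fin m → ℝ)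
    (I : Set ℝ) : Prop :=
  ∀ t ∈ I,
    HasDerivAt r (pdRho p (r t) (θ t) (ρ t) (ω t)) t ∧
    (∀ j, HasDerivAt (fun s => θ s j) (pdOmega p j (r t) (θ t) (ρ t) (ω t)) t) ∧
    HasDerivAt ρ (-pdR p (r t) (θ t) (ρ t) (ω t)) t ∧
    (∀ j, HasDerivAt (fun s => ω s j) (-pdTheta p j (r t) (θ t) (ρ t) (ω t)) t)

/-- The interaction-picture (time-dependent) Hamiltonian `K(t,R,θ,ρ,ω) = ρ² - p(R+2tρ,θ,ρ,ω)`. -/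
noncomputable def Kint (t R : ℝ) (θ : Fin m → ℝ) (ρ : ℝ) (ω : Fin m → ℝ) : ℝ :=
  ρ ^ 2 - p (R + 2 * t * ρ) θ ρ ω

/-- `∂K/∂R`. -/
noncomputable def KdR (t R : ℝ) (θ : Fin m → ℝ) (ρ : ℝ) (ω : Fin m → ℝ) : ℝ :=
  deriv (fun x => Kint p t x θ ρ ω) R

/-- `∂K/∂θ_j`. -/
noncomputable def KdTheta (j : Fin m) (t R : ℝ) (θ : Fin m → ℝ) (ρ : ℝ) (ω : Fin m → ℝ) : ℝ :=
  fderiv ℝ (fun θ' => Kint p t R θ' ρ ω) θ (Pi.single j 1)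

/-- `∂K/∂ρ`. -/
noncomputable def KdRho (t R : ℝ) (θ : Fin m → ℝ) (ρ : ℝ) (ω : Fin m → ℝ) : ℝ :=
  deriv (fun x => Kint p t R θ x ω) ρ

/-- `∂K/∂ω_j`. -/
noncomputable def KdOmega (j : Fin m) (t R : ℝ) (θ : Fin m → ℝ) (ρ : ℝ) (ω : Fin m → ℝ) : ℝ :=
  fderiv ℝ (fun ω' => Kint p t R θ ρ ω') ω (Pi.single j 1)

end PhaseDerivs

/-- The phase space `ℝ × ℝ^m × ℝ × ℝ^m` with coordinates `(R, θ, ρ, ω)`. -/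
abbrev Phase (m : ℕ) : Type := ℝ × (Fin m → ℝ) × ℝ × (Fin m → ℝ)

/-- A curve `f = (R,θ,ρ,ω)` solves the interaction-picture Hamiltonian system
`Ṙ = ∂K/∂ρ, θ̇ = ∂K/∂ω, ρ̇ = -∂K/∂R, ω̇ = -∂K/∂θ` on the set `I` of times. -/
def IsIntSolOn {m : ℕ} (p : ℝ → (Fin m → ℝ) → ℝ → (Fin m → ℝ) → ℝ)
    (f : ℝ → Phase m) (I : Set ℝ) : Prop :=
  ∀ t ∈ I,
    HasDerivAt (fun s => (f s).1) (KdRho p t (f t).1 (f t).2.1 (f t).2.2.1 (f t).2.2.2) t ∧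
    (∀ j, HasDerivAt (fun s => (f s).2.1 j)
      (KdOmega p j t (f t).1 (f t).2.1 (f t).2.2.1 (f t).2.2.2) t) ∧
    HasDerivAt (fun s => (f s).2.2.1)
      (-(KdR p t (f t).1 (f t).2.1 (f t).2.2.1 (f t).2.2.2)) t ∧
    (∀ j, HasDerivAt (fun s => (f s).2.2.2 j)
      (-(KdTheta p j t (f t).1 (f t).2.1 (f t).2.2.1 (f t).2.2.2)) t)

/-- The data of a scattering metric of short-range type on the end `(1,∞) × U`:
the boundary metric `h` (smooth, symmetric, positive definite) and the coefficients
`a₀, a₁, a₂` of the kinetic energy, smooth on `(1,∞) × U` with the short-range decay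
`|∂_r^k ∂_θ^α a₀| ≤ C r^{-1-μ-k}`, `|∂_r^k ∂_θ^α a₁| ≤ C r^{-μ-k}`,
`|∂_r^k ∂_θ^α a₂| ≤ C r^{-μ-k}` on `(1,∞) × K` for every compact `K ⊆ U`. -/
structure Coeffs (m : ℕ) (μ : ℝ) (U : Set (Fin m → ℝ)) where
  hM : (Fin m → ℝ) → Matrix (Fin m) (Fin m) ℝ
  a0 : ℝ → (Fin m → ℝ) → ℝ
  a1 : ℝ → (Fin m → ℝ) → Fin m → ℝ
  a2 : ℝ → (Fin m → ℝ) → Matrix (Fin m) (Fin m) ℝ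
  hM_smooth : ∀ j k, ContDiffOn ℝ (⊤ : ℕ∞) (fun θ => hM θ j k) U
  hM_symm : ∀ θ ∈ U, (hM θ).IsSymm
  hM_posdef : ∀ θ ∈ U, (hM θ).PosDef
  a0_smooth : ContDiffOn ℝ (⊤ : ℕ∞) (fun z : ℝ × (Fin m → ℝ) => a0 z.1 z.2) (Ioi (1:ℝ) ×ˢ U)
  a1_smooth : ∀ j, ContDiffOn ℝ (⊤ : ℕ∞) (fun z : ℝ × (Fin m → ℝ) => a1 z.1 z.2 j) (Ioi (1:ℝ) ×ˢ U)
  a2_smooth : ∀ j k, ContDiffOn ℝ (⊤ : ℕ∞) (fun z : ℝ × (Fin m → ℝ) => a2 z.1 z.2 j k) (Ioi (1:ℝ) ×ˢ U)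
  a2_symm : ∀ r θ j k, a2 r θ j k = a2 r θ k j
  a0_decay : ∀ K : Set (Fin m → ℝ), IsCompact K → K ⊆ U → DecayOn a0 (1 + μ) 1 K
  a1_decay : ∀ K : Set (Fin m → ℝ), IsCompact K → K ⊆ U →
    ∀ j, DecayOn (fun r θ => a1 r θ j) μ 1 K
  a2_decay : ∀ K : Set (Fin m → ℝ), IsCompact K → K ⊆ U →
    ∀ j k, DecayOn (fun r θ => a2 r θ j k) μ 1 K

/-- The kinetic energy function associated to the data `c`. -/
noncomputable def Coeffs.p {m : ℕ} {μ : ℝ} {U : Set (Fin m → ℝ)} (c : Coeffs m μ U) :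
    ℝ → (Fin m → ℝ) → ℝ → (Fin m → ℝ) → ℝ :=
  energy c.hM c.a0 c.a1 c.a2


section ODE
variable {E : Type*} [NormedAddCommGroup E] [NormedSpace ℝ E] [FiniteDimensional ℝ E]

lemma lip_closedBall {G : E → E} (hG : ContDiff ℝ 1 G) (x : E) (a : ℝ) :
    ∃ k : NNReal, LipschitzOnWith k G (Metric.closedBall x a) := by
  have hc : IsCompact (Metric.closedBall x a) := by
    have := FiniteDimensional.proper ℝ E
    exact isCompact_closedBall x a
  have hcont : Continuous (fun y => ‖fderiv ℝ G y‖₊) :=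
    (hG.continuous_fderiv one_ne_zero).nnnorm
  obtain ⟨k, hk⟩ := hc.bddAbove_image hcont.continuousOn
  refine ⟨k, ?_⟩
  exact (convex_closedBall x a).lipschitzOnWith_of_nnnorm_fderiv_le
    (fun y _ => (hG.differentiable one_ne_zero) y)
    (fun y hy => hk (mem_image_of_mem _ hy))

lemma dist_sol_le {G : E → E} {B : ℝ} (hB : ∀ x, ‖G x‖ ≤ B) {Z : ℝ → E} {I : Set ℝ}
    (hI : Convex ℝ I)
    (hZ : ∀ t ∈ I, HasDerivAt Z (G (Z t)) t) {s t : ℝ} (hs : s ∈ I) (ht : t ∈ I) :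
    ‖Z t - Z s‖ ≤ B * |t - s| := by
  have := hI.norm_image_sub_le_of_norm_hasDerivWithin_le (f := Z) (C := B)
    (fun x hx => (hZ x hx).hasDerivWithinAt) (fun x _ => hB (Z x)) hs ht
  simpa using this

lemma global_sol {G : E → E} (hG : ContDiff ℝ 1 G) {B : ℝ} (hB : ∀ x, ‖G x‖ ≤ B)
    (t0 : ℝ) (z : E) : ∃ Z : ℝ → E, Z t0 = z ∧ ∀ t, HasDerivAt Z (G (Z t)) t := by
  have hB0 : 0 ≤ B := (norm_nonneg _).trans (hB 0)
  have : CompleteSpace E := FiniteDimensional.complete ℝ E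
  have hloc : ∀ n : ℕ, ∃ Z : ℝ → E, Z t0 = z ∧
      ∀ t ∈ Ioo (t0 - (n + 1)) (t0 + (n + 1)), HasDerivAt Z (G (Z t)) t := by
    intro n
    obtain ⟨k, hk⟩ := lip_closedBall hG z (B * (n + 1))
    have hn : (0:ℝ) ≤ n := Nat.cast_nonneg n
    have ha : (0:ℝ) ≤ B * (n + 1) := by positivity
    have hPL : IsPicardLindelof (fun _ : ℝ => G) (tmin := t0 - (n + 1)) (tmax := t0 + (n + 1))
        ⟨t0, by constructor <;> linarith⟩ z ⟨B * (n + 1), ha⟩ 0 ⟨B, hB0⟩ k :=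
      { lipschitzOnWith := fun t _ => hk
        continuousOn := fun x _ => continuousOn_const
        norm_le := fun t _ x _ => hB x
        mul_max_le := by
          simp only [add_sub_cancel_left, sub_sub_cancel, max_self, NNReal.coe_zero, sub_zero]
          exact le_refl (B * (n + 1)) }
    obtain ⟨Z, hZ0, hZ⟩ := hPL.exists_eq_forall_mem_Icc_hasDerivWithinAt₀
    refine ⟨Z, hZ0, fun t ht => ?_⟩
    exact (hZ t (Ioo_subset_Icc_self ht)).hasDerivAt (Icc_mem_nhds ht.1 ht.2)
  choose Z hZ0 hZ using hloc
  have huniq : ∀ n n' : ℕ, n ≤ n' → EqOn (Z n) (Z n') (Ioo (t0 - (n + 1)) (t0 + (n + 1))) := by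
    intro n n' hnn
    have hn : (0:ℝ) ≤ n := Nat.cast_nonneg n
    have hnn' : (n:ℝ) ≤ n' := by exact_mod_cast hnn
    obtain ⟨k, hk⟩ := lip_closedBall hG z (B * (n + 1))
    have hmem : ∀ q : ℕ, n ≤ q → ∀ t ∈ Ioo (t0 - (n + 1:ℝ)) (t0 + (n + 1)),
        HasDerivAt (Z q) (G (Z q t)) t ∧ Z q t ∈ Metric.closedBall z (B * (n + 1)) := by
      intro q hq t ht
      have hq' : (n:ℝ) ≤ q := by exact_mod_cast hq
      have hsub : ∀ t ∈ Ioo (t0 - (n + 1:ℝ)) (t0 + (n + 1)), HasDerivAt (Z q) (G (Z q t)) t :=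
        fun t ht => hZ q t ⟨by linarith [ht.1], by linarith [ht.2]⟩
      refine ⟨hsub t ht, ?_⟩
      have := dist_sol_le hB (convex_Ioo _ _) hsub (s := t0) ⟨by linarith, by linarith⟩ ht
      rw [mem_closedBall_iff_norm]
      rw [hZ0] at this
      refine this.trans (mul_le_mul_of_nonneg_left ?_ hB0)
      rw [abs_le]; constructor <;> linarith [ht.1, ht.2]
    exact ODE_solution_unique_of_mem_Ioo (v := fun _ => G)
      (s := fun _ => Metric.closedBall z (B * (n + 1))) (t₀ := t0)
      (fun t _ => hk) ⟨by linarith, by linarith⟩ (hmem n le_rfl) (hmem n' hnn)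
      (by rw [hZ0, hZ0])
  refine ⟨fun t => Z ⌈|t - t0|⌉₊ t, by simp [hZ0], fun t => ?_⟩
  set N := ⌈|t - t0|⌉₊ + 1 with hN
  have hlt : |t - t0| < N := by
    have := Nat.le_ceil |t - t0|
    rw [hN]; push_cast; linarith
  have hev : (fun t => Z ⌈|t - t0|⌉₊ t) =ᶠ[𝓝 t] Z N := by
    have : ∀ᶠ s in 𝓝 t, |s - t0| < N :=
      (continuous_abs.comp (continuous_id.sub continuous_const)).continuousAt.eventually_lt
        continuousAt_const hlt
    filter_upwards [this] with s hs
    have h1 : ⌈|s - t0|⌉₊ ≤ N := Nat.ceil_le.2 hs.le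
    refine huniq _ _ h1 ?_
    have := Nat.le_ceil |s - t0|
    have h3 := abs_le.1 this
    constructor <;> linarith [h3.1, h3.2]
  have h2 : t ∈ Ioo (t0 - ((N:ℝ) + 1)) (t0 + (N + 1)) := by
    have h3 := abs_lt.1 hlt
    constructor <;> linarith [h3.1, h3.2]
  have := (hZ N t h2).congr_of_eventuallyEq hev
  rwa [← hev.eq_of_nhds] at this

lemma cont_dep {G : E → E} (hG : ContDiff ℝ 1 G) {B : ℝ} (hB : ∀ x, ‖G x‖ ≤ B)
    {t1 t0 : ℝ} (h10 : t1 ≤ t0) {Y : ℝ → E} (hY : ∀ t ≤ t0, HasDerivAt Y (G (Y t)) t)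
    {ε : ℝ} (hε : 0 < ε) :
    ∃ δ > 0, ∀ Z : ℝ → E, (∀ t, HasDerivAt Z (G (Z t)) t) → ‖Z t0 - Y t0‖ < δ →
      ∀ t ∈ Icc t1 t0, ‖Z t - Y t‖ < ε := by
  have hB0 : 0 ≤ B := (norm_nonneg _).trans (hB 0)
  set a := 1 + B * (t0 - t1) with ha
  obtain ⟨k, hk⟩ := lip_closedBall hG (Y t0) a
  refine ⟨min 1 (ε / (2 * Real.exp (k * (t0 - t1)))), by positivity, ?_⟩
  intro Z hZ hd t ht
  have hd1 : ‖Z t0 - Y t0‖ ≤ 1 := (hd.trans_le (min_le_left _ _)).le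
  have hd2 := hd.trans_le (min_le_right _ _)
  have key := dist_le_of_trajectories_ODE_of_mem (v := fun _ x => - G x) (K := k)
    (s := fun _ => Metric.closedBall (Y t0) a) (f := fun s => Z (t0 - s))
    (g := fun s => Y (t0 - s)) (a := 0) (b := t0 - t1) (δ := ‖Z t0 - Y t0‖)
    (fun s _ => by
      rw [lipschitzOnWith_iff_norm_sub_le] at hk ⊢
      intro x hx y hy
      have := hk hx hy
      rwa [neg_sub_neg, norm_sub_rev])
    (by
      have : Continuous Z := continuous_iff_continuousAt.2 fun t => (hZ t).continuousAt
      exact (this.comp (continuous_const.sub continuous_id)).continuousOn)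
    (by
      intro s hs
      exact (HasDerivAt.comp_const_sub t0 s (hZ (t0 - s))).hasDerivWithinAt)
    (by
      intro s hs
      have := dist_sol_le hB convex_univ (fun t _ => hZ t) (mem_univ t0) (mem_univ (t0 - s))
      rw [mem_closedBall_iff_norm]
      have e : |t0 - s - t0| = s := by
        rw [show t0 - s - t0 = -s by ring, abs_neg, abs_of_nonneg hs.1]
      rw [e] at this
      calc ‖Z (t0 - s) - Y t0‖ ≤ ‖Z (t0 - s) - Z t0‖ + ‖Z t0 - Y t0‖ := norm_sub_le_norm_sub_add_norm_sub _ _ _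
        _ ≤ B * s + 1 := add_le_add this hd1
        _ ≤ a := by nlinarith [hs.2])
    (by
      intro s hs
      exact ((hY (t0 - s) (by linarith [hs.1])).continuousAt.comp
        (f := fun s => t0 - s) (by fun_prop)).continuousWithinAt)
    (by
      intro s hs
      exact (HasDerivAt.comp_const_sub t0 s (hY (t0 - s) (by linarith [hs.1]))).hasDerivWithinAt)
    (by
      intro s hs
      have := dist_sol_le hB (convex_Iic t0) hY (s := t0) (t := t0 - s) (by simp)
        (by simpa using hs.1)
      rw [mem_closedBall_iff_norm]
      have e : |t0 - s - t0| = s := by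
        rw [show t0 - s - t0 = -s by ring, abs_neg, abs_of_nonneg hs.1]
      rw [e] at this
      nlinarith [hs.2])
    (by simp [dist_eq_norm])
    (t0 - t) ⟨by linarith [ht.2], by linarith [ht.1]⟩
  simp only [sub_sub_cancel, dist_eq_norm, sub_zero] at key
  have hexp : Real.exp (k * (t0 - t)) ≤ Real.exp (k * (t0 - t1)) := by
    apply Real.exp_le_exp.2
    exact mul_le_mul_of_nonneg_left (by linarith [ht.1]) k.2
  have hpos := Real.exp_pos (k * (t0 - t1))
  rw [lt_div_iff₀ (by positivity)] at hd2
  nlinarith [norm_nonneg (Z t0 - Y t0)]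

end ODE

/-- Trapping in the outgoing tail. -/
lemma tail_trap {Y : Type*} [NormedAddCommGroup Y] [NormedSpace ℝ Y]
    {μ c C R0 R1 η t1 : ℝ} (hμ : 0 < μ) (hc : 0 < c) (hC : 0 < C) (hR0 : 0 < R0) (hR1 : R0 < R1)
    (hη : C / (μ * c) * R1 ^ (-μ) < η)
    {r r' : ℝ → ℝ} {y y' : ℝ → Y}
    (hr : ∀ t, HasDerivAt r (r' t) t) (hy : ∀ t, HasDerivAt y (y' t) t)
    (h1 : R1 ≤ r t1)
    (hb : ∀ t ≤ t1, R0 ≤ r t → ‖y t - y t1‖ ≤ η → r' t ≤ -c ∧ ‖y' t‖ ≤ C * r t ^ (-1 - μ)) :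
    ∀ t ≤ t1, r t1 + c * (t1 - t) ≤ r t ∧ ‖y t - y t1‖ < η := by
  have hη0 : 0 < η := lt_trans (by have := hR0.trans hR1; positivity) hη
  have hrc : Continuous r := continuous_iff_continuousAt.2 fun t => (hr t).continuousAt
  have hyc : Continuous y := continuous_iff_continuousAt.2 fun t => (hy t).continuousAt
  -- local improvement
  have imp : ∀ S, 0 ≤ S → (∀ s ∈ Ico 0 S, R0 < r (t1 - s) ∧ ‖y (t1 - s) - y t1‖ < η) →
      r t1 + c * S ≤ r (t1 - S) ∧ ‖y (t1 - S) - y t1‖ < η := by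
    intro S hS hgood
    have hgood' : ∀ s ∈ Icc 0 S, R0 ≤ r (t1 - s) ∧ ‖y (t1 - s) - y t1‖ ≤ η := by
      intro s hs
      rcases hS.eq_or_lt with h | h
      · have : s = 0 := le_antisymm (by linarith [hs.2]) hs.1
        subst this
        simpa using ⟨by linarith, hη0.le⟩
      · have hcl : closure (Ico 0 S) = Icc 0 S := closure_Ico h.ne
        have hcl2 : IsClosed {s | R0 ≤ r (t1 - s) ∧ ‖y (t1 - s) - y t1‖ ≤ η} := by
          have i1 : IsClosed {s | R0 ≤ r (t1 - s)} := isClosed_le continuous_const (by fun_prop)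
          have i2 : IsClosed {s | ‖y (t1 - s) - y t1‖ ≤ η} := isClosed_le (by fun_prop) continuous_const
          exact i1.inter i2
        have : Icc 0 S ⊆ {s | R0 ≤ r (t1 - s) ∧ ‖y (t1 - s) - y t1‖ ≤ η} := by
          rw [← hcl]
          exact hcl2.closure_subset_iff.2 fun s hs => ⟨(hgood s hs).1.le, (hgood s hs).2.le⟩
        exact this hs
    have hbb : ∀ s ∈ Icc 0 S, r' (t1 - s) ≤ -c ∧ ‖y' (t1 - s)‖ ≤ C * r (t1 - s) ^ (-1 - μ) :=
      fun s hs => hb _ (by linarith [hs.1]) (hgood' s hs).1 (hgood' s hs).2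
    have hrs : ∀ s, HasDerivAt (fun s => r (t1 - s)) (-r' (t1 - s)) s := by
      intro s
      exact HasDerivAt.comp_const_sub t1 s (hr (t1 - s))
    have hys : ∀ s, HasDerivAt (fun s => y (t1 - s) - y t1) (-y' (t1 - s)) s := by
      intro s
      exact (HasDerivAt.comp_const_sub t1 s (hy (t1 - s))).sub_const (y t1)
    have hmono : ∀ s ∈ Icc 0 S, r t1 + c * s ≤ r (t1 - s) := by
      have hm : MonotoneOn (fun s => r (t1 - s) - c * s) (Icc 0 S) := by
        apply monotoneOn_of_hasDerivWithinAt_nonneg (f' := fun s => -r' (t1 - s) - c) (convex_Icc _ _)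
        · fun_prop
        · intro s hs
          have := (hrs s).sub ((hasDerivAt_id s).const_mul c)
          simp only [mul_one] at this
          exact this.hasDerivWithinAt
        · intro s hs
          have := (hbb s (interior_subset hs)).1
          linarith
      intro s hs
      have := hm (left_mem_Icc.2 hS) hs hs.1
      simp at this
      linarith
    refine ⟨hmono S (right_mem_Icc.2 hS), ?_⟩
    have hpos : ∀ s ∈ Icc 0 S, 0 < r (t1 - s) := fun s hs => hR0.trans_le (hgood' s hs).1
    have hBd : ∀ s ∈ Icc 0 S, HasDerivAt
        (fun s => C / (μ * c) * (r t1 ^ (-μ) - r (t1 - s) ^ (-μ)))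
        (C / (μ * c) * (μ * r (t1 - s) ^ (-1 - μ) * (-r' (t1 - s)))) s := by
      intro s hs
      have := ((hrs s).rpow_const (p := -μ) (Or.inl (hpos s hs).ne'))
      have := (this.const_sub (r t1 ^ (-μ))).const_mul (C / (μ * c))
      convert! this using 1
      rw [show -μ - 1 = -1 - μ by ring]; ring
    have := image_norm_le_of_norm_deriv_right_le_deriv_boundary'
      (f := fun s => y (t1 - s) - y t1) (f' := fun s => -y' (t1 - s)) (a := 0) (b := S)
      (B := fun s => C / (μ * c) * (r t1 ^ (-μ) - r (t1 - s) ^ (-μ)))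
      (B' := fun s => C / (μ * c) * (μ * r (t1 - s) ^ (-1 - μ) * (-r' (t1 - s))))
      (by fun_prop) (fun s _ => (hys s).hasDerivWithinAt) (by simp)
      (fun s hs => (hBd s hs).continuousAt.continuousWithinAt)
      (fun s hs => (hBd s (Ico_subset_Icc_self hs)).hasDerivWithinAt)
      (by
        intro s hs
        have hs' := Ico_subset_Icc_self hs
        rw [norm_neg]
        refine (hbb s hs').2.trans ?_
        have hp : 0 < r (t1 - s) ^ (-1 - μ) := Real.rpow_pos_of_pos (hpos s hs') _
        have h2 := (hbb s hs').1
        calc C * r (t1 - s) ^ (-1 - μ) = C / (μ * c) * (μ * r (t1 - s) ^ (-1 - μ) * c) := by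
              field_simp
          _ ≤ _ := by gcongr; linarith)
      (right_mem_Icc.2 hS)
    refine this.trans_lt (lt_of_le_of_lt ?_ hη)
    have hp : 0 < r (t1 - S) ^ (-μ) := Real.rpow_pos_of_pos (hpos S (right_mem_Icc.2 hS)) _
    have hq : r t1 ^ (-μ) ≤ R1 ^ (-μ) :=
      Real.rpow_le_rpow_of_nonpos (hR0.trans hR1) h1 (by linarith)
    gcongr
    linarith
  -- continuity argument
  have main : ∀ S, 0 ≤ S → R0 < r (t1 - S) ∧ ‖y (t1 - S) - y t1‖ < η := by
    by_contra hcon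
    push Not at hcon
    let bad : Set ℝ := {s | 0 ≤ s ∧ (r (t1 - s) ≤ R0 ∨ η ≤ ‖y (t1 - s) - y t1‖)}
    have hbadcl : IsClosed bad := by
      have i1 : IsClosed {s | r (t1 - s) ≤ R0} := isClosed_le (by fun_prop) continuous_const
      have i2 : IsClosed {s | η ≤ ‖y (t1 - s) - y t1‖} := isClosed_le continuous_const (by fun_prop)
      exact isClosed_Ici.inter (i1.union i2)
    have hne : bad.Nonempty := by
      obtain ⟨S, hS, h⟩ := hcon
      refine ⟨S, hS, ?_⟩
      by_cases h' : R0 < r (t1 - S)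
      · exact Or.inr (h h')
      · exact Or.inl (not_lt.1 h')
    have hbdd : BddBelow bad := ⟨0, fun s hs => hs.1⟩
    have hmem := hbadcl.csInf_mem hne hbdd
    have := imp (sInf bad) hmem.1 (by
      intro s hs
      have : s ∉ bad := notMem_of_lt_csInf hs.2 hbdd
      by_contra hh
      apply this
      refine ⟨hs.1, ?_⟩
      by_cases h' : R0 < r (t1 - s)
      · right; by_contra h2; exact hh ⟨h', not_le.1 h2⟩
      · exact Or.inl (not_lt.1 h'))
    rcases hmem.2 with h | h
    · have : 0 ≤ c * sInf bad := mul_nonneg hc.le hmem.1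
      linarith
    · linarith
  intro t ht
  have := imp (t1 - t) (by linarith) (fun s hs => main s hs.1)
  simpa using this
section Formulas
variable {m : ℕ} {μ : ℝ} {U : Set (Fin m → ℝ)}

/-- quadratic form -/
noncomputable def QF (A : Matrix (Fin m) (Fin m) ℝ) (ω : Fin m → ℝ) : ℝ :=
  ∑ j, ∑ k, A j k * ω j * ω k

lemma diff_sec_r {f : ℝ → (Fin m → ℝ) → ℝ} (hU : IsOpen U)
    (hf : ContDiffOn ℝ (⊤ : ℕ∞) (fun z : ℝ × (Fin m → ℝ) => f z.1 z.2) (Ioi (1:ℝ) ×ˢ U))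
    {r : ℝ} {θ : Fin m → ℝ} (hr : 1 < r) (hθ : θ ∈ U) :
    HasDerivAt (fun s => f s θ) (pderivR f r θ) r := by
  have h1 : DifferentiableAt ℝ (fun z : ℝ × (Fin m → ℝ) => f z.1 z.2) (r, θ) :=
    ((hf.contDiffAt ((isOpen_Ioi.prod hU).mem_nhds (show (r, θ) ∈ Ioi (1:ℝ) ×ˢ U from ⟨hr, hθ⟩))).differentiableAt (by simp))
  have h2 : DifferentiableAt ℝ (fun s : ℝ => (s, θ)) r := by fun_prop
  exact (DifferentiableAt.comp r h1 h2).hasDerivAt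

lemma diff_sec_theta {f : ℝ → (Fin m → ℝ) → ℝ} (hU : IsOpen U)
    (hf : ContDiffOn ℝ (⊤ : ℕ∞) (fun z : ℝ × (Fin m → ℝ) => f z.1 z.2) (Ioi (1:ℝ) ×ˢ U))
    {r : ℝ} {θ : Fin m → ℝ} (hr : 1 < r) (hθ : θ ∈ U) :
    HasFDerivAt (f r) (fderiv ℝ (f r) θ) θ := by
  have h1 : DifferentiableAt ℝ (fun z : ℝ × (Fin m → ℝ) => f z.1 z.2) (r, θ) :=
    ((hf.contDiffAt ((isOpen_Ioi.prod hU).mem_nhds (show (r, θ) ∈ Ioi (1:ℝ) ×ˢ U from ⟨hr, hθ⟩))).differentiableAt (by simp))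
  have h2 : DifferentiableAt ℝ (fun s : Fin m → ℝ => (r, s)) θ := by fun_prop
  exact (DifferentiableAt.comp θ h1 h2).hasFDerivAt

lemma pdRho_eq (c : Coeffs m μ U) (r : ℝ) (θ : Fin m → ℝ) (ρ : ℝ) (ω : Fin m → ℝ) :
    pdRho c.p r θ ρ ω = 2 * ρ + c.a0 r θ * (2 * ρ) + (∑ j, c.a1 r θ j * ω j) / r := by
  have h0 : HasDerivAt (fun s : ℝ => s ^ 2) (2 * ρ) ρ := by simpa using hasDerivAt_pow 2 ρ
  have h1 : HasDerivAt (fun s : ℝ => ∑ j, c.a1 r θ j * s * ω j) (∑ j, c.a1 r θ j * ω j) ρ := by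
    apply HasDerivAt.fun_sum
    intro j _
    have := ((hasDerivAt_id ρ).const_mul (c.a1 r θ j)).mul_const (ω j)
    simpa using this
  have := ((((h0.add_const (QF (c.hM θ) ω / r ^ 2)).add (h0.const_mul (c.a0 r θ))).add
    (h1.div_const r)).add_const (QF (c.a2 r θ) ω / r ^ 2)).deriv
  exact this

lemma pdR_eq (c : Coeffs m μ U) (hU : IsOpen U) {r : ℝ} {θ : Fin m → ℝ} (hr : 1 < r)
    (hθ : θ ∈ U) (ρ : ℝ) (ω : Fin m → ℝ) :
    pdR c.p r θ ρ ω = -2 * QF (c.hM θ) ω / r ^ 3 + pderivR c.a0 r θ * ρ ^ 2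
      + ((∑ j, pderivR (fun r θ => c.a1 r θ j) r θ * ρ * ω j) / r
        - (∑ j, c.a1 r θ j * ρ * ω j) / r ^ 2)
      + (QF (fun j k => pderivR (fun r θ => c.a2 r θ j k) r θ) ω / r ^ 2
        - 2 * QF (c.a2 r θ) ω / r ^ 3) := by
  have hr0 : r ≠ 0 := by linarith
  have h0 := diff_sec_r hU c.a0_smooth hr hθ
  have h1 : HasDerivAt (fun s : ℝ => ∑ j, c.a1 s θ j * ρ * ω j)
      (∑ j, pderivR (fun r θ => c.a1 r θ j) r θ * ρ * ω j) r := by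
    apply HasDerivAt.fun_sum
    intro j _
    exact ((diff_sec_r (f := fun r θ => c.a1 r θ j) hU (c.a1_smooth j) hr hθ).mul_const ρ).mul_const (ω j)
  have h2 : HasDerivAt (fun s : ℝ => ∑ j, ∑ k, c.a2 s θ j k * ω j * ω k)
      (QF (fun j k => pderivR (fun r θ => c.a2 r θ j k) r θ) ω) r := by
    apply HasDerivAt.fun_sum
    intro j _
    apply HasDerivAt.fun_sum
    intro k _
    exact ((diff_sec_r (f := fun r θ => c.a2 r θ j k) hU (c.a2_smooth j k) hr hθ).mul_const _).mul_const _
  have hid := hasDerivAt_id r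
  have hsq : HasDerivAt (fun s : ℝ => s ^ 2) (2 * r) r := by simpa using hasDerivAt_pow 2 r
  have hh := (hasDerivAt_const r (QF (c.hM θ) ω)).div hsq (pow_ne_zero 2 hr0)
  have := ((((hh.const_add (ρ ^ 2)).add (h0.mul_const (ρ ^ 2))).add
    (h1.div hid hr0)).add (h2.div hsq (pow_ne_zero 2 hr0))).deriv
  refine Eq.trans this ?_
  simp only [id, QF]
  field_simp
  ring

lemma pdTheta_eq (c : Coeffs m μ U) (hU : IsOpen U) {r : ℝ} {θ : Fin m → ℝ} (hr : 1 < r)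
    (hθ : θ ∈ U) (ρ : ℝ) (ω : Fin m → ℝ) (l : Fin m) :
    pdTheta c.p l r θ ρ ω =
      QF (fun j k => fderiv ℝ (fun θ => c.hM θ j k) θ (Pi.single l 1)) ω / r ^ 2
      + pderivTheta l c.a0 r θ * ρ ^ 2
      + (∑ j, pderivTheta l (fun r θ => c.a1 r θ j) r θ * ρ * ω j) / r
      + QF (fun j k => pderivTheta l (fun r θ => c.a2 r θ j k) r θ) ω / r ^ 2 := by
  have hh : HasFDerivAt (fun θ => ∑ j, ∑ k, c.hM θ j k * ω j * ω k)
      (∑ j, ∑ k, (ω k) • ((ω j) • fderiv ℝ (fun θ => c.hM θ j k) θ)) θ := by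
    apply HasFDerivAt.fun_sum
    intro j _
    apply HasFDerivAt.fun_sum
    intro k _
    exact ((((c.hM_smooth j k).contDiffAt (hU.mem_nhds hθ)).differentiableAt
      (by simp)).hasFDerivAt.mul_const _).mul_const _
  have h0 := diff_sec_theta hU c.a0_smooth hr hθ
  have h1 : HasFDerivAt (fun θ => ∑ j, c.a1 r θ j * ρ * ω j)
      (∑ j, (ω j) • (ρ • fderiv ℝ (fun θ => c.a1 r θ j) θ)) θ := by
    apply HasFDerivAt.fun_sum
    intro j _
    exact ((diff_sec_theta (f := fun r θ => c.a1 r θ j) hU (c.a1_smooth j) hr hθ).mul_const ρ).mul_const (ω j)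
  have h2 : HasFDerivAt (fun θ => ∑ j, ∑ k, c.a2 r θ j k * ω j * ω k)
      (∑ j, ∑ k, (ω k) • ((ω j) • fderiv ℝ (fun θ => c.a2 r θ j k) θ)) θ := by
    apply HasFDerivAt.fun_sum
    intro j _
    apply HasFDerivAt.fun_sum
    intro k _
    exact ((diff_sec_theta (f := fun r θ => c.a2 r θ j k) hU (c.a2_smooth j k) hr hθ).mul_const _).mul_const _
  have := (((((hh.mul_const (r ^ 2)⁻¹).const_add (ρ ^ 2)).add (h0.mul_const (ρ ^ 2))).add
    (h1.mul_const r⁻¹)).add (h2.mul_const (r ^ 2)⁻¹))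
  have h3 : HasFDerivAt (fun θ' => c.p r θ' ρ ω) _ θ := this
  unfold pdTheta
  rw [h3.fderiv]
  simp only [_root_.add_apply, _root_.smul_apply,
    _root_.sum_apply, smul_eq_mul, QF, pderivTheta, div_eq_inv_mul]
  congr 2
  · congr 1
    · congr 1
      exact Finset.sum_congr rfl fun j _ => Finset.sum_congr rfl fun k _ => by ring
    · ring
  · congr 1
    exact Finset.sum_congr rfl fun j _ => by ring
  · exact Finset.sum_congr rfl fun j _ => Finset.sum_congr rfl fun k _ => by ring

lemma hasFDerivAt_QF (A : Matrix (Fin m) (Fin m) ℝ) (ω : Fin m → ℝ) (l : Fin m) :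
    ∃ L : (Fin m → ℝ) →L[ℝ] ℝ, HasFDerivAt (fun ω => ∑ j, ∑ k, A j k * ω j * ω k) L ω ∧
      L (Pi.single l 1) = ∑ k, A l k * ω k + ∑ j, A j l * ω j := by
  have hp : ∀ j, HasFDerivAt (fun ω : Fin m → ℝ => ω j)
      (ContinuousLinearMap.proj (R := ℝ) (φ := fun _ : Fin m => ℝ) j) ω := fun j =>
    (ContinuousLinearMap.proj (R := ℝ) (φ := fun _ : Fin m => ℝ) j).hasFDerivAt
  refine ⟨_, HasFDerivAt.fun_sum fun j _ => HasFDerivAt.fun_sum fun k _ =>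
    ((hp j).const_mul (A j k)).mul (hp k), ?_⟩
  simp only [_root_.add_apply, _root_.smul_apply,
    _root_.sum_apply, smul_eq_mul, ContinuousLinearMap.proj_apply, Pi.single_apply,
    Finset.sum_add_distrib]
  rw [add_comm]
  congr 1
  · rw [Finset.sum_comm]
    simp [mul_comm]
  · simp

lemma pdOmega_eq (c : Coeffs m μ U) (r : ℝ) (θ : Fin m → ℝ) (ρ : ℝ) (ω : Fin m → ℝ)
    (l : Fin m) :
    pdOmega c.p l r θ ρ ω =
      (∑ k, c.hM θ l k * ω k + ∑ j, c.hM θ j l * ω j) / r ^ 2 + c.a1 r θ l * ρ / r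
      + (∑ k, c.a2 r θ l k * ω k + ∑ j, c.a2 r θ j l * ω j) / r ^ 2 := by
  obtain ⟨L0, hL0, e0⟩ := hasFDerivAt_QF (c.hM θ) ω l
  obtain ⟨L2, hL2, e2⟩ := hasFDerivAt_QF (c.a2 r θ) ω l
  have hp : ∀ j, HasFDerivAt (fun ω : Fin m → ℝ => ω j)
      (ContinuousLinearMap.proj (R := ℝ) (φ := fun _ : Fin m => ℝ) j) ω := fun j =>
    (ContinuousLinearMap.proj (R := ℝ) (φ := fun _ : Fin m => ℝ) j).hasFDerivAt
  have h1 : HasFDerivAt (fun ω : Fin m → ℝ => ∑ j, c.a1 r θ j * ρ * ω j) _ ω :=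
    HasFDerivAt.fun_sum fun j _ => (hp j).const_mul (c.a1 r θ j * ρ)
  have := (((((hL0.mul_const (r ^ 2)⁻¹).const_add (ρ ^ 2)).add_const (c.a0 r θ * ρ ^ 2)).add
    (h1.mul_const r⁻¹)).add (hL2.mul_const (r ^ 2)⁻¹))
  have h3 : HasFDerivAt (fun ω' => c.p r θ ρ ω') _ ω := this
  unfold pdOmega
  rw [h3.fderiv]
  simp only [_root_.add_apply, _root_.smul_apply,
    _root_.sum_apply, smul_eq_mul, div_eq_inv_mul, e0, e2,
    ContinuousLinearMap.proj_apply, Pi.single_apply]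
  simp

end Formulas
section Bounds
variable {m : ℕ} {μ : ℝ} {U : Set (Fin m → ℝ)}

lemma lin_bound (A : Fin m → ℝ) (ω : Fin m → ℝ) {a w : ℝ} (hA : ∀ j, |A j| ≤ a)
    (hω : ∀ j, |ω j| ≤ w) (ha : 0 ≤ a) : |∑ j, A j * ω j| ≤ m * (a * w) := by
  calc |∑ j, A j * ω j| ≤ ∑ j, |A j * ω j| := Finset.abs_sum_le_sum_abs _ _
    _ ≤ ∑ _j : Fin m, a * w := Finset.sum_le_sum fun j _ => by
        rw [abs_mul]; exact mul_le_mul (hA j) (hω j) (abs_nonneg _) ha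
    _ = _ := by simp

lemma QF_bound (A : Matrix (Fin m) (Fin m) ℝ) (ω : Fin m → ℝ) {a w : ℝ} (hA : ∀ j k, |A j k| ≤ a)
    (hω : ∀ j, |ω j| ≤ w) (ha : 0 ≤ a) (hw : 0 ≤ w) : |QF A ω| ≤ m ^ 2 * (a * w ^ 2) := by
  calc |QF A ω| ≤ ∑ j, |∑ k, A j k * ω j * ω k| := Finset.abs_sum_le_sum_abs _ _
    _ ≤ ∑ j : Fin m, ∑ k, |A j k * ω j * ω k| :=
        Finset.sum_le_sum fun j _ => Finset.abs_sum_le_sum_abs _ _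
    _ ≤ ∑ _j : Fin m, ∑ _k : Fin m, a * w * w := by
        refine Finset.sum_le_sum fun j _ => Finset.sum_le_sum fun k _ => ?_
        rw [abs_mul, abs_mul]
        exact mul_le_mul (mul_le_mul (hA j k) (hω j) (abs_nonneg _) ha) (hω k) (abs_nonneg _)
          (mul_nonneg ha hw)
    _ = _ := by simp; ring

/-- Quantitative bounds on the energy function and its derivatives. -/
structure FB (c : Coeffs m μ U) (K : Set (Fin m → ℝ)) (C : ℝ) : Prop where
  pos : 0 < C
  b1 : ∀ r > 1, ∀ θ ∈ K, ∀ ρ ω, |pdRho c.p r θ ρ ω - 2 * ρ| ≤ C * r ^ (-μ) * (|ρ| + ‖ω‖ / r)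
  b2 : ∀ r > 1, ∀ θ ∈ K, ∀ ρ ω l, |pdOmega c.p l r θ ρ ω| ≤
    C * (‖ω‖ / r ^ 2 + r ^ (-μ) / r * |ρ|)
  b3 : ∀ r > 1, ∀ θ ∈ K, ∀ ρ ω, |pdR c.p r θ ρ ω + 2 * QF (c.hM θ) ω / r ^ 3| ≤
    C * (r ^ (-μ) / r) * (ρ ^ 2 + (‖ω‖ / r) ^ 2)
  b4 : ∀ r > 1, ∀ θ ∈ K, ∀ ρ ω l, |pdTheta c.p l r θ ρ ω| ≤
    C * ((‖ω‖ / r) ^ 2 + r ^ (-μ) / r * (ρ ^ 2 + |ρ| * ‖ω‖))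
  b5 : ∀ r > 1, ∀ θ ∈ K, ∀ ρ ω, |c.p r θ ρ ω - ρ ^ 2 - QF (c.hM θ) ω / r ^ 2| ≤
    C * r ^ (-μ) * (ρ ^ 2 + (‖ω‖ / r) ^ 2)
  b6 : ∀ θ ∈ K, ∀ ω, |QF (c.hM θ) ω| ≤ C * ‖ω‖ ^ 2

/-- Uniform constants for the coefficients. -/
structure CB (c : Coeffs m μ U) (K : Set (Fin m → ℝ)) (D : ℝ) : Prop where
  pos : 0 < D
  h0 : ∀ θ ∈ K, ∀ j k, |c.hM θ j k| ≤ D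
  h1 : ∀ θ ∈ K, ∀ j k l, |fderiv ℝ (fun θ => c.hM θ j k) θ (Pi.single l 1)| ≤ D
  a00 : ∀ r > 1, ∀ θ ∈ K, |c.a0 r θ| ≤ D * (r ^ (-μ) / r)
  a01 : ∀ r > 1, ∀ θ ∈ K, |pderivR c.a0 r θ| ≤ D * (r ^ (-μ) / r ^ 2)
  a02 : ∀ r > 1, ∀ θ ∈ K, ∀ l, |pderivTheta l c.a0 r θ| ≤ D * (r ^ (-μ) / r)
  a10 : ∀ r > 1, ∀ θ ∈ K, ∀ j, |c.a1 r θ j| ≤ D * r ^ (-μ)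
  a11 : ∀ r > 1, ∀ θ ∈ K, ∀ j, |pderivR (fun r θ => c.a1 r θ j) r θ| ≤ D * (r ^ (-μ) / r)
  a12 : ∀ r > 1, ∀ θ ∈ K, ∀ j l, |pderivTheta l (fun r θ => c.a1 r θ j) r θ| ≤ D * r ^ (-μ)
  a20 : ∀ r > 1, ∀ θ ∈ K, ∀ j k, |c.a2 r θ j k| ≤ D * r ^ (-μ)
  a21 : ∀ r > 1, ∀ θ ∈ K, ∀ j k, |pderivR (fun r θ => c.a2 r θ j k) r θ| ≤ D * (r ^ (-μ) / r)
  a22 : ∀ r > 1, ∀ θ ∈ K, ∀ j k l,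
    |pderivTheta l (fun r θ => c.a2 r θ j k) r θ| ≤ D * r ^ (-μ)

/-- eventually-for-large-constants packaging -/
lemma ev_of_exists {P : ℝ → Prop} (h : ∃ C, P C) (hm : ∀ a b, a ≤ b → P a → P b) :
    ∀ᶠ D in atTop, P D := by
  obtain ⟨C, hC⟩ := h
  filter_upwards [eventually_ge_atTop C] with D hD using hm _ _ hD hC

lemma dec_ev {f : ℝ → (Fin m → ℝ) → ℝ} {K : Set (Fin m → ℝ)} {ν : ℝ} (h : DecayOn f ν 1 K)
    (k : ℕ) (α : List (Fin m)) (g : ℝ → ℝ) (hg : ∀ r > 1, r ^ (-ν - (k:ℝ)) = g r) :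
    ∀ᶠ D : ℝ in atTop, ∀ r > 1, ∀ θ ∈ K,
      |(pderivR (m := m))^[k] (thetaDerivs α f) r θ| ≤ D * g r := by
  obtain ⟨C, hC, h⟩ := h k α
  filter_upwards [eventually_ge_atTop C] with D hD r hr θ hθ
  rw [← hg r hr]
  refine (h r hr θ hθ).trans ?_
  have : 0 < r ^ (-ν - (k:ℝ)) := Real.rpow_pos_of_pos (by linarith) _
  gcongr

lemma cpt_ev {f : (Fin m → ℝ) → ℝ} {K : Set (Fin m → ℝ)} (hK : IsCompact K)
    (hf : ContinuousOn f K) : ∀ᶠ D : ℝ in atTop, ∀ θ ∈ K, |f θ| ≤ D := by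
  obtain ⟨C, hC⟩ := hK.exists_bound_of_continuousOn hf
  filter_upwards [eventually_ge_atTop C] with D hD θ hθ
  exact (hC θ hθ).trans hD

lemma exists_CB (hU : IsOpen U) (c : Coeffs m μ U) {K : Set (Fin m → ℝ)} (hK : IsCompact K)
    (hKU : K ⊆ U) : ∃ D, CB c K D := by
  have e0 : ∀ r > (1:ℝ), r ^ (-μ - ((0:ℕ):ℝ)) = r ^ (-μ) := fun r hr => by simp
  have e1 : ∀ r > (1:ℝ), r ^ (-μ - ((1:ℕ):ℝ)) = r ^ (-μ) / r := fun r hr => by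
    rw [Real.rpow_sub (by linarith)]; simp
  have f0 : ∀ r > (1:ℝ), r ^ (-(1 + μ) - ((0:ℕ):ℝ)) = r ^ (-μ) / r := fun r hr => by
    rw [← e1 r hr]; congr 1; push_cast; ring
  have f1 : ∀ r > (1:ℝ), r ^ (-(1 + μ) - ((1:ℕ):ℝ)) = r ^ (-μ) / r ^ 2 := fun r hr => by
    rw [show -(1 + μ) - ((1:ℕ):ℝ) = -μ - ((2:ℕ):ℝ) by push_cast; ring,
      Real.rpow_sub (by linarith), Real.rpow_natCast]
  have d0 := c.a0_decay K hK hKU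
  have d1 := c.a1_decay K hK hKU
  have d2 := c.a2_decay K hK hKU
  have h0 : ∀ᶠ D : ℝ in atTop, ∀ j k, ∀ θ ∈ K, |c.hM θ j k| ≤ D := by
    simp only [eventually_all]
    intro j k
    exact cpt_ev hK ((c.hM_smooth j k).continuousOn.mono hKU)
  have h1 : ∀ᶠ D : ℝ in atTop, ∀ j k l, ∀ θ ∈ K,
      |fderiv ℝ (fun θ => c.hM θ j k) θ (Pi.single l 1)| ≤ D := by
    simp only [eventually_all]
    intro j k l
    refine cpt_ev hK (ContinuousOn.mono ?_ hKU)
    exact ((c.hM_smooth j k).continuousOn_fderiv_of_isOpen hU (by simp)).clm_apply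
      continuousOn_const
  have a00 := dec_ev d0 0 [] _ f0
  have a01 := dec_ev d0 1 [] _ f1
  have a02 := eventually_all.2 fun l => dec_ev d0 0 [l] _ f0
  have a10 := eventually_all.2 fun j => dec_ev (d1 j) 0 [] _ e0
  have a11 := eventually_all.2 fun j => dec_ev (d1 j) 1 [] _ e1
  have a12 := eventually_all.2 fun j => eventually_all.2 fun l => dec_ev (d1 j) 0 [l] _ e0
  have a20 := eventually_all.2 fun j => eventually_all.2 fun k => dec_ev (d2 j k) 0 [] _ e0
  have a21 := eventually_all.2 fun j => eventually_all.2 fun k => dec_ev (d2 j k) 1 [] _ e1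
  have a22 := eventually_all.2 fun j => eventually_all.2 fun k => eventually_all.2 fun l =>
    dec_ev (d2 j k) 0 [l] _ e0
  have hD := (((((((((((eventually_gt_atTop (0:ℝ)).and h0).and h1).and a00).and a01).and a02).and
    a10).and a11).and a12).and a20).and a21).and a22
  obtain ⟨D, hD⟩ := hD.exists
  obtain ⟨⟨⟨⟨⟨⟨⟨⟨⟨⟨⟨p, h0⟩, h1⟩, a00⟩, a01⟩, a02⟩, a10⟩, a11⟩, a12⟩, a20⟩, a21⟩, a22⟩ := hD
  exact ⟨D, p, fun θ hθ j k => h0 j k θ hθ, fun θ hθ j k l => h1 j k l θ hθ, a00, a01,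
    fun r hr θ hθ l => a02 l r hr θ hθ, fun r hr θ hθ j => a10 j r hr θ hθ,
    fun r hr θ hθ j => a11 j r hr θ hθ, fun r hr θ hθ j l => a12 j l r hr θ hθ,
    fun r hr θ hθ j k => a20 j k r hr θ hθ, fun r hr θ hθ j k => a21 j k r hr θ hθ,
    fun r hr θ hθ j k l => a22 j k l r hr θ hθ⟩

lemma exists_FB (hμ : 0 < μ) (hU : IsOpen U) (c : Coeffs m μ U) {K : Set (Fin m → ℝ)} (hK : IsCompact K)
    (hKU : K ⊆ U) : ∃ C, FB c K C := by
  obtain ⟨D, hD⟩ := exists_CB hU c hK hKU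
  have D0 := hD.pos
  have hM0 : (0:ℝ) ≤ m := Nat.cast_nonneg m
  set M : ℝ := (m : ℝ) with hM
  have hω : ∀ (ω : Fin m → ℝ) j, |ω j| ≤ ‖ω‖ := fun ω j => norm_le_pi_norm ω j
  refine ⟨10 * (M + 1) ^ 2 * D, by positivity, ?_, ?_, ?_, ?_, ?_, ?_⟩
  · intro r hr θ hθ ρ ω
    have hr0 : 0 < r := by linarith
    have hx : 0 < r ^ (-μ) := Real.rpow_pos_of_pos hr0 _
    set x := r ^ (-μ)
    have k1 := hD.a00 r hr θ hθ
    have k2 := lin_bound (c.a1 r θ) ω (hD.a10 r hr θ hθ) (hω ω) (by positivity)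
    have k1' : |c.a0 r θ| ≤ D * x := k1.trans (by gcongr; exact div_le_self hx.le hr.le)
    rw [pdRho_eq]
    have hA := abs_nonneg ρ
    have hw : 0 ≤ ‖ω‖ / r := by positivity
    calc |2 * ρ + c.a0 r θ * (2 * ρ) + (∑ j, c.a1 r θ j * ω j) / r - 2 * ρ|
        = |c.a0 r θ * (2 * ρ) + (∑ j, c.a1 r θ j * ω j) / r| := by congr 1; ring
      _ ≤ |c.a0 r θ| * (2 * |ρ|) + |∑ j, c.a1 r θ j * ω j| / r := by
          refine (abs_add_le _ _).trans (le_of_eq ?_)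
          rw [abs_mul, abs_mul, abs_div, abs_of_pos hr0, abs_two]
      _ ≤ D * x * (2 * |ρ|) + M * (D * x * ‖ω‖) / r := by gcongr
      _ = D * x * (2 * |ρ| + M * (‖ω‖ / r)) := by ring
      _ ≤ D * x * (10 * (M + 1) ^ 2 * (|ρ| + ‖ω‖ / r)) := by
          gcongr
          nlinarith [mul_nonneg hM0 hA, mul_nonneg (mul_nonneg hM0 hM0) hA, mul_nonneg hM0 hw,
            mul_nonneg (mul_nonneg hM0 hM0) hw]
      _ = _ := by ring
  · intro r hr θ hθ ρ ω l
    have hr0 : 0 < r := by linarith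
    have hx : 0 < r ^ (-μ) := Real.rpow_pos_of_pos hr0 _
    have hx1 : r ^ (-μ) ≤ 1 := Real.rpow_le_one_of_one_le_of_nonpos hr.le (by linarith)
    set x := r ^ (-μ)
    have hA := abs_nonneg ρ
    have hW := norm_nonneg ω
    have hw : 0 ≤ ‖ω‖ / r := by positivity
    have k1 := lin_bound (fun k => c.hM θ l k) ω (hD.h0 θ hθ l) (hω ω) (by positivity)
    have k2 := lin_bound (fun j => c.hM θ j l) ω (fun j => hD.h0 θ hθ j l) (hω ω) (by positivity)
    have k3 := lin_bound (fun k => c.a2 r θ l k) ω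
      (fun j => (hD.a20 r hr θ hθ l j).trans (mul_le_of_le_one_right D0.le hx1)) (hω ω) (by positivity)
    have k4 := lin_bound (fun k => c.a2 r θ k l) ω
      (fun j => (hD.a20 r hr θ hθ j l).trans (mul_le_of_le_one_right D0.le hx1)) (hω ω) (by positivity)
    have k5 := hD.a10 r hr θ hθ l
    rw [pdOmega_eq]
    have hu : 0 ≤ ‖ω‖ / r ^ 2 := by positivity
    have hv : 0 ≤ x / r * |ρ| := by positivity
    have k12 := (abs_add_le _ _).trans (add_le_add k1 k2)
    have k34 := (abs_add_le _ _).trans (add_le_add k3 k4)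
    calc _ ≤ (M * (D * ‖ω‖) + M * (D * ‖ω‖)) / r ^ 2 + D * x * |ρ| / r
          + (M * (D * ‖ω‖) + M * (D * ‖ω‖)) / r ^ 2 := by
          refine (abs_add_le _ _).trans (add_le_add ((abs_add_le _ _).trans (add_le_add ?_ ?_)) ?_)
          · rw [abs_div, abs_of_pos (pow_pos hr0 2)]; gcongr
          · rw [abs_div, abs_mul, abs_of_pos hr0]; gcongr
          · rw [abs_div, abs_of_pos (pow_pos hr0 2)]; gcongr
      _ = D * (4 * M * (‖ω‖ / r ^ 2) + x / r * |ρ|) := by ring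
      _ ≤ D * (10 * (M + 1) ^ 2 * (‖ω‖ / r ^ 2 + x / r * |ρ|)) := by
          gcongr
          nlinarith [mul_nonneg hM0 hu, mul_nonneg (mul_nonneg hM0 hM0) hu, mul_nonneg hM0 hv,
            mul_nonneg (mul_nonneg hM0 hM0) hv]
      _ = _ := by ring
  · intro r hr θ hθ ρ ω
    have hr0 : 0 < r := by linarith
    have hx : 0 < r ^ (-μ) := Real.rpow_pos_of_pos hr0 _
    have hx1 : r ^ (-μ) ≤ 1 := Real.rpow_le_one_of_one_le_of_nonpos hr.le (by linarith)
    set x := r ^ (-μ)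
    have hA := abs_nonneg ρ
    have hW := norm_nonneg ω
    have hw : 0 ≤ ‖ω‖ / r := by positivity
    have k1 := hD.a01 r hr θ hθ
    have k2 := lin_bound (fun j => pderivR (fun r θ => c.a1 r θ j) r θ * ρ) ω
      (a := D * (x / r) * |ρ|) (fun j => by rw [abs_mul]; gcongr; exact hD.a11 r hr θ hθ j)
      (hω ω) (by positivity)
    have k3 := lin_bound (fun j => c.a1 r θ j * ρ) ω
      (a := D * x * |ρ|) (fun j => by rw [abs_mul]; gcongr; exact hD.a10 r hr θ hθ j)
      (hω ω) (by positivity)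
    have k4 := QF_bound (fun j k => pderivR (fun r θ => c.a2 r θ j k) r θ) ω
      (hD.a21 r hr θ hθ) (hω ω) (by positivity) hW
    have k5 := QF_bound (c.a2 r θ) ω (hD.a20 r hr θ hθ) (hω ω) (by positivity) hW
    have k1' : |pderivR c.a0 r θ| ≤ D * (x / r) := k1.trans (by
      gcongr; nlinarith)
    rw [pdR_eq c hU hr (hKU hθ)]
    have hy : 0 ≤ D * (x / r) := by positivity
    calc |_| = |pderivR c.a0 r θ * ρ ^ 2
      + ((∑ j, pderivR (fun r θ => c.a1 r θ j) r θ * ρ * ω j) / r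
        - (∑ j, c.a1 r θ j * ρ * ω j) / r ^ 2)
      + (QF (fun j k => pderivR (fun r θ => c.a2 r θ j k) r θ) ω / r ^ 2
        - 2 * QF (c.a2 r θ) ω / r ^ 3)| := by congr 1; ring
      _ ≤ D * (x / r) * ρ ^ 2 + (M * (D * (x / r) * |ρ| * ‖ω‖) / r + M * (D * x * |ρ| * ‖ω‖) / r ^ 2)
        + (M ^ 2 * (D * (x / r) * ‖ω‖ ^ 2) / r ^ 2 + 2 * (M ^ 2 * (D * x * ‖ω‖ ^ 2)) / r ^ 3) := by
          refine (abs_add_le _ _).trans (add_le_add ((abs_add_le _ _).trans (add_le_add ?_ ?_)) ?_)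
          · rw [abs_mul, abs_of_nonneg (sq_nonneg ρ)]; gcongr
          · refine (abs_sub _ _).trans (add_le_add ?_ ?_)
            · rw [abs_div, abs_of_pos hr0]; gcongr
            · rw [abs_div, abs_of_pos (pow_pos hr0 2)]; gcongr
          · refine (abs_sub _ _).trans (add_le_add ?_ ?_)
            · rw [abs_div, abs_of_pos (pow_pos hr0 2)]; gcongr
            · rw [abs_div, abs_mul, abs_two, abs_of_pos (pow_pos hr0 3)]; gcongr
      _ = D * (x / r) * (|ρ| ^ 2 + 2 * M * (|ρ| * (‖ω‖ / r)) + 3 * M ^ 2 * (‖ω‖ / r) ^ 2) := by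
          rw [sq_abs]; field_simp; ring
      _ ≤ D * (x / r) * (10 * (M + 1) ^ 2 * (|ρ| ^ 2 + (‖ω‖ / r) ^ 2)) := by
          gcongr
          nlinarith [mul_nonneg hM0 (sq_nonneg (|ρ| - ‖ω‖ / r)),
            mul_nonneg (mul_nonneg hM0 hM0) (sq_nonneg |ρ|), mul_nonneg hM0 (sq_nonneg |ρ|),
            mul_nonneg (mul_nonneg hM0 hM0) (sq_nonneg (‖ω‖ / r)), mul_nonneg hM0 (sq_nonneg (‖ω‖ / r)),
            sq_nonneg |ρ|, sq_nonneg (‖ω‖ / r)]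
      _ = _ := by rw [sq_abs]; ring
  · intro r hr θ hθ ρ ω l
    have hr0 : 0 < r := by linarith
    have hx : 0 < r ^ (-μ) := Real.rpow_pos_of_pos hr0 _
    have hx1 : r ^ (-μ) ≤ 1 := Real.rpow_le_one_of_one_le_of_nonpos hr.le (by linarith)
    set x := r ^ (-μ)
    have hA := abs_nonneg ρ
    have hW := norm_nonneg ω
    have hw : 0 ≤ ‖ω‖ / r := by positivity
    have k0 := QF_bound (fun j k => fderiv ℝ (fun θ => c.hM θ j k) θ (Pi.single l 1)) ω
      (fun j k => hD.h1 θ hθ j k l) (hω ω) (by positivity) hW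
    have k1 := hD.a02 r hr θ hθ l
    have k2 := lin_bound (fun j => pderivTheta l (fun r θ => c.a1 r θ j) r θ * ρ) ω
      (a := D * x * |ρ|) (fun j => by rw [abs_mul]; gcongr; exact hD.a12 r hr θ hθ j l)
      (hω ω) (by positivity)
    have k4 := QF_bound (fun j k => pderivTheta l (fun r θ => c.a2 r θ j k) r θ) ω
      (fun j k => (hD.a22 r hr θ hθ j k l).trans (mul_le_of_le_one_right D0.le hx1)) (hω ω) (by positivity) hW
    rw [pdTheta_eq c hU hr (hKU hθ)]
    have hu : 0 ≤ (‖ω‖ / r) ^ 2 := by positivity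
    have hv : 0 ≤ x / r * ρ ^ 2 := by positivity
    have hz : 0 ≤ x / r * (|ρ| * ‖ω‖) := by positivity
    calc _ ≤ M ^ 2 * (D * ‖ω‖ ^ 2) / r ^ 2 + D * (x / r) * ρ ^ 2 + M * (D * x * |ρ| * ‖ω‖) / r
          + M ^ 2 * (D * ‖ω‖ ^ 2) / r ^ 2 := by
          refine (abs_add_le _ _).trans (add_le_add ((abs_add_le _ _).trans (add_le_add
            ((abs_add_le _ _).trans (add_le_add ?_ ?_)) ?_)) ?_)
          · rw [abs_div, abs_of_pos (pow_pos hr0 2)]; gcongr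
          · rw [abs_mul, abs_of_nonneg (sq_nonneg ρ)]; gcongr
          · rw [abs_div, abs_of_pos hr0]; gcongr
          · rw [abs_div, abs_of_pos (pow_pos hr0 2)]; gcongr
      _ = D * (2 * M ^ 2 * (‖ω‖ / r) ^ 2 + x / r * ρ ^ 2 + M * (x / r * (|ρ| * ‖ω‖))) := by
          ring
      _ ≤ D * (10 * (M + 1) ^ 2 * ((‖ω‖ / r) ^ 2 + x / r * ρ ^ 2 + x / r * (|ρ| * ‖ω‖))) := by
          gcongr
          nlinarith [mul_nonneg hM0 hu, mul_nonneg (mul_nonneg hM0 hM0) hu, mul_nonneg hM0 hv,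
            mul_nonneg (mul_nonneg hM0 hM0) hv, mul_nonneg hM0 hz,
            mul_nonneg (mul_nonneg hM0 hM0) hz]
      _ = _ := by ring
  · intro r hr θ hθ ρ ω
    have hr0 : 0 < r := by linarith
    have hx : 0 < r ^ (-μ) := Real.rpow_pos_of_pos hr0 _
    have hx1 : r ^ (-μ) ≤ 1 := Real.rpow_le_one_of_one_le_of_nonpos hr.le (by linarith)
    set x := r ^ (-μ)
    have hA := abs_nonneg ρ
    have hW := norm_nonneg ω
    have hw : 0 ≤ ‖ω‖ / r := by positivity
    have k1 := hD.a00 r hr θ hθ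
    have k1' : |c.a0 r θ| ≤ D * x := k1.trans (by gcongr; exact div_le_self hx.le hr.le)
    have k3 := lin_bound (fun j => c.a1 r θ j * ρ) ω
      (a := D * x * |ρ|) (fun j => by rw [abs_mul]; gcongr; exact hD.a10 r hr θ hθ j)
      (hω ω) (by positivity)
    have k5 := QF_bound (c.a2 r θ) ω (hD.a20 r hr θ hθ) (hω ω) (by positivity) hW
    have e : c.p r θ ρ ω - ρ ^ 2 - QF (c.hM θ) ω / r ^ 2 = c.a0 r θ * ρ ^ 2
      + (∑ j, c.a1 r θ j * ρ * ω j) / r + QF (c.a2 r θ) ω / r ^ 2 := by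
      simp only [Coeffs.p, energy, QF]; ring
    rw [e]
    calc _ ≤ D * x * ρ ^ 2 + M * (D * x * |ρ| * ‖ω‖) / r + M ^ 2 * (D * x * ‖ω‖ ^ 2) / r ^ 2 := by
          refine (abs_add_le _ _).trans (add_le_add ((abs_add_le _ _).trans (add_le_add ?_ ?_)) ?_)
          · rw [abs_mul, abs_of_nonneg (sq_nonneg ρ)]; gcongr
          · rw [abs_div, abs_of_pos hr0]; gcongr
          · rw [abs_div, abs_of_pos (pow_pos hr0 2)]; gcongr
      _ = D * x * (|ρ| ^ 2 + M * (|ρ| * (‖ω‖ / r)) + M ^ 2 * (‖ω‖ / r) ^ 2) := by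
          rw [sq_abs]; ring
      _ ≤ D * x * (10 * (M + 1) ^ 2 * (|ρ| ^ 2 + (‖ω‖ / r) ^ 2)) := by
          gcongr
          nlinarith [mul_nonneg hM0 (sq_nonneg (|ρ| - ‖ω‖ / r)),
            mul_nonneg (mul_nonneg hM0 hM0) (sq_nonneg |ρ|), mul_nonneg hM0 (sq_nonneg |ρ|),
            mul_nonneg (mul_nonneg hM0 hM0) (sq_nonneg (‖ω‖ / r)), mul_nonneg hM0 (sq_nonneg (‖ω‖ / r)),
            sq_nonneg |ρ|, sq_nonneg (‖ω‖ / r)]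
      _ = _ := by rw [sq_abs]; ring
  · intro θ hθ ω
    have := QF_bound (c.hM θ) ω (hD.h0 θ hθ) (hω ω) D0.le (norm_nonneg _)
    refine this.trans ?_
    have hw : 0 ≤ D * ‖ω‖ ^ 2 := by positivity
    nlinarith [mul_nonneg hM0 hw, mul_nonneg (mul_nonneg hM0 hM0) hw]

end Bounds
section Coer
variable {m : ℕ} {μ : ℝ} {U : Set (Fin m → ℝ)}

lemma QF_smul (A : Matrix (Fin m) (Fin m) ℝ) (a : ℝ) (ω : Fin m → ℝ) :
    QF A (a • ω) = a ^ 2 * QF A ω := by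
  simp only [QF, Finset.mul_sum, Pi.smul_apply, smul_eq_mul]
  exact Finset.sum_congr rfl fun j _ => Finset.sum_congr rfl fun k _ => by ring

lemma QF_pos {A : Matrix (Fin m) (Fin m) ℝ} (hA : A.PosDef) {ω : Fin m → ℝ} (h : ω ≠ 0) :
    0 < QF A ω := by
  have := hA.dotProduct_mulVec_pos h
  have e : QF A ω = dotProduct (star ω) (A.mulVec ω) := by
    simp only [QF, dotProduct, Matrix.mulVec, Finset.mul_sum]
    exact Finset.sum_congr rfl fun j _ => Finset.sum_congr rfl fun k _ => by simp; ring
  rw [e]; exact this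

lemma coercive (c : Coeffs m μ U) {K : Set (Fin m → ℝ)} (hK : IsCompact K)
    (hKU : K ⊆ U) : ∃ k > 0, ∀ θ ∈ K, ∀ ω, k * ‖ω‖ ^ 2 ≤ QF (c.hM θ) ω := by
  have hc : IsCompact (K ×ˢ Metric.sphere (0 : Fin m → ℝ) 1) := hK.prod (isCompact_sphere _ _)
  have hcont : ContinuousOn (fun z : (Fin m → ℝ) × (Fin m → ℝ) => QF (c.hM z.1) z.2)
      (K ×ˢ Metric.sphere (0 : Fin m → ℝ) 1) := by
    unfold QF
    refine continuousOn_finsetSum _ fun j _ => continuousOn_finsetSum _ fun k _ => ?_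
    refine ContinuousOn.mul (ContinuousOn.mul ?_ ?_) ?_
    · exact ((c.hM_smooth j k).continuousOn.mono hKU).comp continuousOn_fst fun z hz => hz.1
    · fun_prop
    · fun_prop
  rcases (K ×ˢ Metric.sphere (0 : Fin m → ℝ) 1).eq_empty_or_nonempty with he | hne
  · refine ⟨1, one_pos, fun θ hθ ω => ?_⟩
    by_cases h : ω = 0
    · subst h; simp [QF]
    · exfalso
      have : (θ, ‖ω‖⁻¹ • ω) ∈ K ×ˢ Metric.sphere (0 : Fin m → ℝ) 1 :=
        ⟨hθ, by simp [norm_smul, h]⟩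
      rw [he] at this; exact this
  · obtain ⟨z, hz, hmin⟩ := hc.exists_isMinOn hne hcont
    refine ⟨QF (c.hM z.1) z.2, QF_pos (c.hM_posdef _ (hKU hz.1)) ?_, fun θ hθ ω => ?_⟩
    · intro h0
      have := hz.2
      simp [h0] at this
    by_cases h : ω = 0
    · subst h; simp [QF]
    have hm' : (θ, ‖ω‖⁻¹ • ω) ∈ K ×ˢ Metric.sphere (0 : Fin m → ℝ) 1 :=
        ⟨hθ, by simp [norm_smul, h]⟩
    have := hmin hm'
    simp only [mem_ofPred_eq] at this
    rw [QF_smul] at this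
    have hn : 0 < ‖ω‖ := norm_pos_iff.2 h
    calc _ ≤ ‖ω‖⁻¹ ^ 2 * QF (c.hM θ) ω * ‖ω‖ ^ 2 := by gcongr
      _ = _ := by field_simp

end Coer

section Ref

lemma mono_Iic {f f' : ℝ → ℝ} {T : ℝ} (h : ∀ t ≤ T, HasDerivAt f (f' t) t)
    (hn : ∀ t ≤ T, 0 ≤ f' t) : ∀ t ≤ T, f t ≤ f T := by
  have : MonotoneOn f (Iic T) := by
    refine monotoneOn_of_hasDerivWithinAt_nonneg (f' := f') (convex_Iic T)
      (fun t ht => (h t ht).continuousAt.continuousWithinAt) (fun t ht => ?_) (fun t ht => ?_)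
    · exact (h t (mem_Iic.1 (interior_subset ht))).hasDerivWithinAt
    · exact hn t (mem_Iic.1 (interior_subset ht))
  exact fun t ht => this ht self_mem_Iic ht

end Ref
section RefAsym
variable {m : ℕ} {μ : ℝ} {U : Set (Fin m → ℝ)}

lemma abs_le_of_sq_le {a S : ℝ} (h : a ^ 2 ≤ S) : |a| ≤ S + 1 := by
  nlinarith [sq_abs a, sq_nonneg (|a| - 1), abs_nonneg a]

/-- pointwise consequences of the energy identity when `r` is large -/
lemma pt_est {c : Coeffs m μ U} {K : Set (Fin m → ℝ)} {C k p₀ : ℝ} (hF : FB c K C)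
    (hk : 0 < k) (hk1 : k ≤ 1) (hQ : ∀ θ ∈ K, ∀ ω, k * ‖ω‖ ^ 2 ≤ QF (c.hM θ) ω)
    {r : ℝ} {θ : Fin m → ℝ} {ρ : ℝ} {ω : Fin m → ℝ} (hr : 1 < r) (hθ : θ ∈ K)
    (hen : c.p r θ ρ ω = p₀) (hx : C * r ^ (-μ) ≤ k / 2) :
    ρ ^ 2 + (‖ω‖ / r) ^ 2 ≤ 2 * p₀ / k ∧
    |p₀ - ρ ^ 2 - QF (c.hM θ) ω / r ^ 2| ≤ C * r ^ (-μ) * (2 * p₀ / k) ∧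
    |pdRho c.p r θ ρ ω - 2 * ρ| ≤ C * r ^ (-μ) * (2 * (2 * p₀ / k + 1)) ∧
    |pdR c.p r θ ρ ω + 2 * QF (c.hM θ) ω / r ^ 3| ≤ C * (r ^ (-μ) / r) * (2 * p₀ / k) ∧
    |ρ| ≤ 2 * p₀ / k + 1 ∧ ‖ω‖ / r ≤ 2 * p₀ / k + 1 ∧
    2 * p₀ - 5 * (C * r ^ (-μ) * (2 * p₀ / k)) ≤
      pdRho c.p r θ ρ ω * ρ + r * (-pdR c.p r θ ρ ω) := by
  have hr0 : 0 < r := by linarith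
  have hC := hF.pos
  have hxp : 0 < r ^ (-μ) := Real.rpow_pos_of_pos hr0 _
  have k1 := hF.b1 r hr θ hθ ρ ω
  have k3 := hF.b3 r hr θ hθ ρ ω
  have k5 := hF.b5 r hr θ hθ ρ ω
  rw [hen] at k5
  have q := hQ θ hθ ω
  set x := r ^ (-μ)
  set v := ‖ω‖ / r with hv
  set H := QF (c.hM θ) ω
  have hv0 : 0 ≤ v := by positivity
  have q' : k * v ^ 2 ≤ H / r ^ 2 := by
    rw [hv, div_pow, ← mul_div_assoc]; gcongr
  have hS0 : 0 ≤ ρ ^ 2 + v ^ 2 := by positivity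
  have hS : ρ ^ 2 + v ^ 2 ≤ 2 * p₀ / k := by
    rw [le_div_iff₀ hk]
    have := (abs_le.1 k5).1
    have h2 : C * x * (ρ ^ 2 + v ^ 2) ≤ k / 2 * (ρ ^ 2 + v ^ 2) := by gcongr
    nlinarith [sq_nonneg ρ]
  set S := 2 * p₀ / k
  have hρ : |ρ| ≤ S + 1 := abs_le_of_sq_le (by nlinarith [sq_nonneg v])
  have hvv : v ≤ S + 1 := (le_abs_self v).trans (abs_le_of_sq_le (by nlinarith [sq_nonneg ρ]))
  refine ⟨hS, k5.trans (by gcongr), k1.trans (by gcongr; linarith), k3.trans (by gcongr), hρ, hvv, ?_⟩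
  have e1 : |(pdRho c.p r θ ρ ω - 2 * ρ) * ρ| ≤ C * x * (2 * S) := by
    rw [abs_mul]
    calc _ ≤ C * x * (|ρ| + v) * |ρ| := by gcongr
      _ = C * x * ((|ρ| + v) * |ρ|) := by ring
      _ ≤ _ := by
        refine mul_le_mul_of_nonneg_left ?_ (by positivity)
        nlinarith [sq_abs ρ, sq_nonneg (|ρ| - v), sq_nonneg v]
  have e3 : |r * (pdR c.p r θ ρ ω + 2 * H / r ^ 3)| ≤ C * x * S := by
    rw [abs_mul, abs_of_pos hr0]
    calc _ ≤ r * (C * (x / r) * (ρ ^ 2 + v ^ 2)) := by gcongr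
      _ = C * x * (ρ ^ 2 + v ^ 2) := by field_simp
      _ ≤ _ := by gcongr
  have e5 := (abs_le.1 (k5.trans (show _ ≤ C * x * S by gcongr))).2
  have i1 := (abs_le.1 e1).1
  have i3 := (abs_le.1 e3).2
  have : r * (2 * H / r ^ 3) = 2 * (H / r ^ 2) := by field_simp
  rw [mul_add, this] at i3
  linarith

lemma ev_small {r : ℝ → ℝ} (hμ : 0 < μ) (hesc : Tendsto r atBot atTop) {ε : ℝ} (hε : 0 < ε) :
    ∀ᶠ t in atBot, r t ^ (-μ) < ε :=
  ((tendsto_rpow_neg_atTop hμ).comp hesc).eventually (gt_mem_nhds hε)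

lemma ref_rho {c : Coeffs m μ U} (hμ : 0 < μ) {K : Set (Fin m → ℝ)} {C k p₀ T₀ : ℝ} (hF : FB c K C)
    (hk : 0 < k) (hk1 : k ≤ 1) (hQ : ∀ θ ∈ K, ∀ ω, k * ‖ω‖ ^ 2 ≤ QF (c.hM θ) ω)
    {r : ℝ → ℝ} {θ : ℝ → Fin m → ℝ} {ρ : ℝ → ℝ} {ω : ℝ → Fin m → ℝ} (hp₀ : 0 < p₀)
    (hdom : ∀ t ≤ T₀, r t ∈ Ioi (1:ℝ) ∧ θ t ∈ K)
    (hsol : IsHamSolOn c.p r θ ρ ω (Iic T₀))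
    (hen : ∀ t ≤ T₀, c.p (r t) (θ t) (ρ t) (ω t) = p₀)
    (hesc : Tendsto r atBot atTop) :
    ∃ c0 > 0, ∃ tb ≤ T₀, ∀ t ≤ tb, ρ t ≤ -c0 ∧ C * r t ^ (-μ) ≤ k / 2 ∧
      pdRho c.p (r t) (θ t) (ρ t) (ω t) ≤ -c0 := by
  have hC := hF.pos
  set S := 2 * p₀ / k with hS
  have hSp : 0 < S := by positivity
  set c0 := p₀ / (6 * (S + 1)) with hc0
  have hc0p : 0 < c0 := by positivity
  obtain ⟨ε, hε, h1, h2, h3⟩ : ∃ ε > 0, C * ε ≤ k / 2 ∧ 5 * (C * ε * S) ≤ p₀ ∧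
      C * ε * (2 * (S + 1)) ≤ c0 := by
    refine ⟨min (k / 2 / C) (min (p₀ / (5 * C * S)) (c0 / (C * (2 * (S + 1))))), by positivity,
      ?_, ?_, ?_⟩
    · calc _ ≤ C * (k / 2 / C) := by gcongr; exact min_le_left _ _
        _ = _ := by field_simp
    · calc _ ≤ 5 * (C * (p₀ / (5 * C * S)) * S) := by
            gcongr; exact (min_le_right _ _).trans (min_le_left _ _)
        _ = _ := by field_simp
    · calc _ ≤ C * (c0 / (C * (2 * (S + 1)))) * (2 * (S + 1)) := by
            gcongr; exact (min_le_right _ _).trans (min_le_right _ _)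
        _ = _ := by field_simp
  obtain ⟨ta, hta⟩ := eventually_atBot.1 ((ev_small hμ hesc hε).and (eventually_le_atBot T₀))
  have htaT : ta ≤ T₀ := (hta ta le_rfl).2
  have key : ∀ t ≤ ta, _ := fun t ht => pt_est hF hk hk1 hQ (hdom t (ht.trans htaT)).1
    (hdom t (ht.trans htaT)).2 (hen t (ht.trans htaT))
    ((mul_le_mul_of_nonneg_left (hta t ht).1.le hC.le).trans h1)
  have hxe : ∀ t ≤ ta, C * r t ^ (-μ) ≤ C * ε := fun t ht =>
    mul_le_mul_of_nonneg_left (hta t ht).1.le hC.le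
  have hf : ∀ t ≤ ta, r t * ρ t + c0 * r t - p₀ / 2 * t ≤
      r ta * ρ ta + c0 * r ta - p₀ / 2 * ta := by
    refine mono_Iic (f := fun t => r t * ρ t + c0 * r t - p₀ / 2 * t)
      (f' := fun t => (pdRho c.p (r t) (θ t) (ρ t) (ω t) * ρ t +
        r t * (-pdR c.p (r t) (θ t) (ρ t) (ω t))) + c0 * pdRho c.p (r t) (θ t) (ρ t) (ω t)
        - p₀ / 2 * 1) ?_ ?_
    · intro t ht
      obtain ⟨d1, -, d3, -⟩ := hsol t (ht.trans htaT)
      exact ((d1.mul d3).add (d1.const_mul c0)).sub ((hasDerivAt_id t).const_mul _)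
    · intro t ht
      obtain ⟨-, -, j1, -, j2, -, j3⟩ := key t ht
      have hx := hxe t ht
      have a1 : C * r t ^ (-μ) * S ≤ C * ε * S := by gcongr
      have a2 : C * r t ^ (-μ) * (2 * (S + 1)) ≤ 1 * (S + 1) := by
        have : C * r t ^ (-μ) * (2 * (S + 1)) ≤ (k / 2) * (2 * (S + 1)) := by
          gcongr; exact hx.trans h1
        nlinarith
      have a3 := (abs_le.1 j1).1
      have a4 := (abs_le.1 j2).1
      have a5 : -(3 * (S + 1)) ≤ pdRho c.p (r t) (θ t) (ρ t) (ω t) := by linarith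
      have a6 : c0 * -(3 * (S + 1)) ≤ c0 * pdRho c.p (r t) (θ t) (ρ t) (ω t) := by gcongr
      have a7 : c0 * -(3 * (S + 1)) = - (p₀ / 2) := by rw [hc0]; field_simp; norm_num
      linarith
  set F := r ta * ρ ta + c0 * r ta - p₀ / 2 * ta
  refine ⟨c0, hc0p, min ta (- F / (p₀ / 2)), (min_le_left _ _).trans htaT, fun t ht => ?_⟩
  have ht1 : t ≤ ta := ht.trans (min_le_left _ _)
  have ht2 : t ≤ - F / (p₀ / 2) := ht.trans (min_le_right _ _)
  rw [le_div_iff₀ (by positivity)] at ht2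
  have h4 := hf t ht1
  have hr : 1 < r t := (hdom t (ht1.trans htaT)).1
  have hρ : ρ t ≤ -c0 := by
    by_contra hcon
    push Not at hcon
    have : 0 < r t * (ρ t + c0) := mul_pos (by linarith) (by linarith)
    nlinarith
  refine ⟨hρ, (hxe t ht1).trans h1, ?_⟩
  have j1 := (key t ht1).2.2.1
  have a3 := (abs_le.1 j1).2
  have a1 : C * r t ^ (-μ) * (2 * (S + 1)) ≤ C * ε * (2 * (S + 1)) := by
    gcongr ?_ * _; exact hxe t ht1
  linarith

end RefAsym
section RefOmega
variable {m : ℕ} {μ : ℝ} {U : Set (Fin m → ℝ)}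

lemma ref_v {c : Coeffs m μ U} (hμ : μ ∈ Ioo (0:ℝ) 1) {K : Set (Fin m → ℝ)} {C k p₀ tb c0 : ℝ}
    (hF : FB c K C)
    (hk : 0 < k) (hk1 : k ≤ 1) (hQ : ∀ θ ∈ K, ∀ ω, k * ‖ω‖ ^ 2 ≤ QF (c.hM θ) ω)
    {r : ℝ → ℝ} {θ : ℝ → Fin m → ℝ} {ρ : ℝ → ℝ} {ω : ℝ → Fin m → ℝ} (hp₀ : 0 < p₀)
    (hdom : ∀ t ≤ tb, r t ∈ Ioi (1:ℝ) ∧ θ t ∈ K)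
    (hsol : IsHamSolOn c.p r θ ρ ω (Iic tb))
    (hen : ∀ t ≤ tb, c.p (r t) (θ t) (ρ t) (ω t) = p₀)
    (hc0 : 0 < c0) (hx : ∀ t ≤ tb, C * r t ^ (-μ) ≤ k / 2)
    (hrd : ∀ t ≤ tb, pdRho c.p (r t) (θ t) (ρ t) (ω t) ≤ -c0) :
    ∃ D > 0, ∀ t ≤ tb, ‖ω t‖ / r t ≤ D * r t ^ (-(μ / 2)) := by
  have hC := hF.pos
  have key : ∀ t ≤ tb, _ := fun t ht => pt_est hF hk hk1 hQ (hdom t ht).1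
    (hdom t ht).2 (hen t ht) (hx t ht)
  set S := 2 * p₀ / k with hS
  have hSp : 0 < S := by positivity
  set A1 : ℝ := 4 * (S + 1) * (C * S) + 2 * (C * (2 * (S + 1))) * (p₀ + S) + 2 * (S + 1) * (C * S)
    with hA1
  have hA1p : 0 < A1 := by positivity
  have hxr : ∀ t ≤ tb, r t ^ (2 - μ) = r t ^ 2 * r t ^ (-μ) := fun t ht => by
    have : 0 < r t := lt_trans one_pos (hdom t ht).1
    rw [sub_eq_add_neg, Real.rpow_add this]; norm_num
  have hxr1 : ∀ t ≤ tb, r t ^ (2 - μ - 1) = r t * r t ^ (-μ) := fun t ht => by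
    have : 0 < r t := lt_trans one_pos (hdom t ht).1
    rw [show 2 - μ - 1 = 1 + (-μ) by ring, Real.rpow_add this]; norm_num
  have hmono : ∀ t ≤ tb, r t ^ 2 * (p₀ - ρ t ^ 2) - A1 / c0 * r t ^ (2 - μ) ≤
      r tb ^ 2 * (p₀ - ρ tb ^ 2) - A1 / c0 * r tb ^ (2 - μ) := by
    refine mono_Iic (f := fun t => r t ^ 2 * (p₀ - ρ t ^ 2) - A1 / c0 * r t ^ (2 - μ))
      (f' := fun t => (2 * r t * pdRho c.p (r t) (θ t) (ρ t) (ω t) * (p₀ - ρ t ^ 2) +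
        r t ^ 2 * -(2 * ρ t * (-pdR c.p (r t) (θ t) (ρ t) (ω t))))
        - A1 / c0 * (pdRho c.p (r t) (θ t) (ρ t) (ω t) * (2 - μ) * r t ^ (2 - μ - 1))) ?_ ?_
    · intro t ht
      obtain ⟨d1, -, d3, -⟩ := hsol t ht
      have hr0 : 0 < r t := lt_trans one_pos (hdom t ht).1
      have d1' : HasDerivAt (fun s => r s ^ 2) (2 * r t * pdRho c.p (r t) (θ t) (ρ t) (ω t)) t := by
        simpa using d1.fun_pow 2
      have d3' : HasDerivAt (fun s => ρ s ^ 2) (2 * ρ t * (-pdR c.p (r t) (θ t) (ρ t) (ω t))) t := by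
        simpa using d3.fun_pow 2
      exact (d1'.mul (d3'.const_sub p₀)).sub
        ((d1.rpow_const (p := 2 - μ) (Or.inl hr0.ne')).const_mul _)
    · intro t ht
      have hr0 : 0 < r t := lt_trans one_pos (hdom t ht).1
      obtain ⟨j0, j5, j1, j3, jρ, jv, -⟩ := key t ht
      have hd := hrd t ht
      rw [hxr1 t ht]
      have hxp : 0 < r t ^ (-μ) := Real.rpow_pos_of_pos hr0 _
      set x := r t ^ (-μ)
      set P := pdRho c.p (r t) (θ t) (ρ t) (ω t)
      set Q := pdR c.p (r t) (θ t) (ρ t) (ω t)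
      set H := QF (c.hM (θ t)) (ω t)
      have hE : |p₀ - ρ t ^ 2| ≤ p₀ + S := by
        rw [abs_le]
        constructor <;> nlinarith [sq_nonneg (ρ t), sq_nonneg (‖ω t‖ / r t)]
      have e : 2 * r t * P * (p₀ - ρ t ^ 2) + r t ^ 2 * -(2 * ρ t * -Q) =
          4 * r t * ρ t * (p₀ - ρ t ^ 2 - H / r t ^ 2) + 2 * r t * (P - 2 * ρ t) * (p₀ - ρ t ^ 2)
          + 2 * r t ^ 2 * ρ t * (Q + 2 * H / r t ^ 3) := by
        field_simp; ring
      have b : |2 * r t * P * (p₀ - ρ t ^ 2) + r t ^ 2 * -(2 * ρ t * -Q)| ≤ A1 * (r t * x) := by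
        rw [e]
        calc _ ≤ 4 * r t * (S + 1) * (C * x * S) + 2 * r t * (C * x * (2 * (S + 1))) * (p₀ + S)
              + 2 * r t ^ 2 * (S + 1) * (C * (x / r t) * S) := by
              refine (abs_add_le _ _).trans (add_le_add ((abs_add_le _ _).trans (add_le_add ?_ ?_)) ?_)
              · rw [abs_mul, abs_mul, abs_of_pos (show 0 < 4 * r t by positivity)]
                gcongr
              · rw [abs_mul, abs_mul, abs_of_pos (show 0 < 2 * r t by positivity)]
                gcongr
              · rw [abs_mul, abs_mul, abs_of_pos (show 0 < 2 * r t ^ 2 by positivity)]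
                gcongr
          _ = _ := by rw [hA1]; field_simp
      have b1 := (abs_le.1 b).1
      have b2 : A1 / c0 * (P * (2 - μ) * (r t * x)) ≤ A1 / c0 * (-c0 * 1 * (r t * x)) := by
        have : P * (2 - μ) ≤ -c0 * 1 := by nlinarith [hμ.1, hμ.2]
        gcongr
      have b3 : A1 / c0 * (-c0 * 1 * (r t * x)) = - (A1 * (r t * x)) := by field_simp
      linarith
  set Q0 := r tb ^ 2 * (p₀ - ρ tb ^ 2) - A1 / c0 * r tb ^ (2 - μ)
  set W : ℝ := (A1 / c0 + |Q0| + C * S) / k with hW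
  have hWp : 0 < W := by positivity
  refine ⟨Real.sqrt W, Real.sqrt_pos.2 hWp, fun t ht => ?_⟩
  have hr1 : 1 < r t := (hdom t ht).1
  have hr0 : 0 < r t := by linarith
  have h1 := hmono t ht
  obtain ⟨-, j5, -⟩ := key t ht
  have hq := hQ _ (hdom t ht).2 (ω t)
  have hx1 : 1 ≤ r t ^ (2 - μ) := Real.one_le_rpow hr1.le (by linarith [hμ.2])
  have h2 : |Q0| ≤ |Q0| * r t ^ (2 - μ) := le_mul_of_one_le_right (abs_nonneg _) hx1
  have h3 := le_abs_self Q0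
  have hxp : 0 < r t ^ (-μ) := Real.rpow_pos_of_pos hr0 _
  rw [hxr t ht] at h1 h2
  have hy2 : (r t ^ (-(μ / 2))) ^ 2 = r t ^ (-μ) := by
    rw [← Real.rpow_natCast, ← Real.rpow_mul hr0.le]; congr 1; push_cast; ring
  have hfin : (‖ω t‖ / r t) ^ 2 ≤ (Real.sqrt W * r t ^ (-(μ / 2))) ^ 2 := by
    rw [mul_pow, hy2, Real.sq_sqrt hWp.le, hW, div_pow, div_le_iff₀ (by positivity)]
    have h5 := (abs_le.1 j5).1
    set x := r t ^ (-μ)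
    have h6 : QF (c.hM (θ t)) (ω t) ≤ r t ^ 2 * (p₀ - ρ t ^ 2 + C * x * S) := by
      have : QF (c.hM (θ t)) (ω t) / r t ^ 2 ≤ p₀ - ρ t ^ 2 + C * x * S := by linarith
      rwa [div_le_iff₀ (by positivity), mul_comm] at this
    have h7 : k * ‖ω t‖ ^ 2 ≤ (A1 / c0 + |Q0| + C * S) * (r t ^ 2 * x) := by nlinarith
    calc ‖ω t‖ ^ 2 = (k * ‖ω t‖ ^ 2) / k := by field_simp
      _ ≤ ((A1 / c0 + |Q0| + C * S) * (r t ^ 2 * x)) / k := by gcongr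
      _ = _ := by ring
  exact le_of_sq_le_sq hfin (by positivity)

lemma ref_omega {c : Coeffs m μ U} (hμ : μ ∈ Ioo (0:ℝ) 1) {K : Set (Fin m → ℝ)} {C B tb c0 D : ℝ}
    (hF : FB c K C)
    {r : ℝ → ℝ} {θ : ℝ → Fin m → ℝ} {ρ : ℝ → ℝ} {ω : ℝ → Fin m → ℝ}
    (hdom : ∀ t ≤ tb, r t ∈ Ioi (1:ℝ) ∧ θ t ∈ K)
    (hsol : IsHamSolOn c.p r θ ρ ω (Iic tb))
    (hc0 : 0 < c0) (hB : 0 < B) (hρ : ∀ t ≤ tb, |ρ t| ≤ B)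
    (hrd : ∀ t ≤ tb, pdRho c.p (r t) (θ t) (ρ t) (ω t) ≤ -c0)
    (hD : 0 < D) (hv : ∀ t ≤ tb, ‖ω t‖ / r t ≤ D * r t ^ (-(μ / 2))) :
    ∃ M, ∀ t ≤ tb, ‖ω t‖ ≤ M := by
  have hC := hF.pos
  set N : ℝ → ℝ := fun t => ∑ j, ω t j ^ 2 with hN
  have hN0 : ∀ t, 0 ≤ N t := fun t => Finset.sum_nonneg fun j _ => sq_nonneg _
  have hωj : ∀ t j, |ω t j| ≤ ‖ω t‖ := fun t j => norm_le_pi_norm (ω t) j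
  have hωN : ∀ t, ‖ω t‖ ^ 2 ≤ N t := fun t => by
    have : ‖ω t‖ ≤ Real.sqrt (N t) := by
      refine (pi_norm_le_iff_of_nonneg (Real.sqrt_nonneg _)).2 fun j => ?_
      apply Real.abs_le_sqrt
      exact Finset.single_le_sum (f := fun j => ω t j ^ 2) (fun j _ => sq_nonneg _) (Finset.mem_univ j)
    calc _ ≤ Real.sqrt (N t) ^ 2 := by gcongr
      _ = _ := Real.sq_sqrt (hN0 t)
  set A2 : ℝ := 2 * m * (C * (D + B ^ 2 + B)) with hA2
  have hA2p : 0 ≤ A2 := by positivity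
  set A : ℝ := A2 / (μ / 2 * c0) with hA
  have hμ0 := hμ.1
  have hAp : 0 ≤ A := by positivity
  have hmono : ∀ t ≤ tb, Real.log (1 + N t) + A * r t ^ (-(μ / 2)) ≤
      Real.log (1 + N tb) + A * r tb ^ (-(μ / 2)) := by
    refine mono_Iic (f := fun t => Real.log (1 + N t) + A * r t ^ (-(μ / 2)))
      (f' := fun t => (∑ j, 2 * ω t j * -pdTheta c.p j (r t) (θ t) (ρ t) (ω t)) / (1 + N t)
        + A * (pdRho c.p (r t) (θ t) (ρ t) (ω t) * (-(μ / 2)) * r t ^ (-(μ / 2) - 1))) ?_ ?_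
    · intro t ht
      obtain ⟨d1, -, -, d4⟩ := hsol t ht
      have hr0 : 0 < r t := lt_trans one_pos (hdom t ht).1
      have dN : HasDerivAt N (∑ j, 2 * ω t j * -pdTheta c.p j (r t) (θ t) (ρ t) (ω t)) t := by
        apply HasDerivAt.fun_sum
        intro j _
        simpa using (d4 j).fun_pow 2
      exact ((dN.const_add 1).log (by have := hN0 t; positivity)).add
        ((d1.rpow_const (p := -(μ / 2)) (Or.inl hr0.ne')).const_mul _)
    · intro t ht
      have hr1 : 1 < r t := (hdom t ht).1
      have hr0 : 0 < r t := by linarith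
      have hNt := hN0 t
      have hxy : r t ^ (-μ) ≤ r t ^ (-(μ / 2)) :=
        Real.rpow_le_rpow_of_exponent_le hr1.le (by linarith)
      have hxp : 0 < r t ^ (-μ) := Real.rpow_pos_of_pos hr0 _
      have hyp : 0 < r t ^ (-(μ / 2)) := Real.rpow_pos_of_pos hr0 _
      have hv' := hv t ht
      have hρ' := hρ t ht
      have b4 := hF.b4 (r t) hr1 (θ t) (hdom t ht).2 (ρ t) (ω t)
      have hd := hrd t ht
      have hy1 : r t ^ (-(μ / 2) - 1) = r t ^ (-(μ / 2)) / r t := by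
        rw [Real.rpow_sub hr0]; simp
      rw [hy1]
      have hw2 := hωN t
      set w := ‖ω t‖ with hw
      have hw0 : 0 ≤ w := norm_nonneg _
      have hww : w ≤ 1 + N t := by nlinarith [sq_nonneg (w - 1)]
      have hw2' : w ^ 2 ≤ 1 + N t := by linarith
      set x := r t ^ (-μ)
      set y := r t ^ (-(μ / 2))
      have hj : ∀ j, |2 * ω t j * -pdTheta c.p j (r t) (θ t) (ρ t) (ω t)| ≤
          2 * (C * (D + B ^ 2 + B)) * (y / r t * (1 + N t)) := by
        intro j
        rw [abs_mul, abs_neg, abs_mul, abs_two]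
        calc _ ≤ 2 * w * (C * ((w / r t) ^ 2 + x / r t * (ρ t ^ 2 + |ρ t| * w))) := by
              gcongr
              · exact hωj t j
              · exact b4 j
          _ = 2 * C * (w ^ 2 * (w / r t) / r t + x / r t * (w * |ρ t| ^ 2 + |ρ t| * w ^ 2)) := by
              rw [sq_abs]; ring
          _ ≤ 2 * C * ((1 + N t) * (D * y) / r t + y / r t * ((1 + N t) * B ^ 2 + B * (1 + N t))) := by
              gcongr
          _ = _ := by ring
      have hs : |∑ j, 2 * ω t j * -pdTheta c.p j (r t) (θ t) (ρ t) (ω t)| ≤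
          A2 * (y / r t * (1 + N t)) := by
        calc _ ≤ ∑ j, |2 * ω t j * -pdTheta c.p j (r t) (θ t) (ρ t) (ω t)| :=
              Finset.abs_sum_le_sum_abs _ _
          _ ≤ ∑ _j : Fin m, 2 * (C * (D + B ^ 2 + B)) * (y / r t * (1 + N t)) :=
              Finset.sum_le_sum fun j _ => hj j
          _ = _ := by simp [hA2]; ring
      have hs1 := (abs_le.1 hs).1
      have hs2 : -(A2 * (y / r t)) ≤
          (∑ j, 2 * ω t j * -pdTheta c.p j (r t) (θ t) (ρ t) (ω t)) / (1 + N t) := by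
        rw [le_div_iff₀ (by positivity)]; linarith
      have hs3 : A2 * (y / r t) ≤
          A * (pdRho c.p (r t) (θ t) (ρ t) (ω t) * (-(μ / 2)) * (y / r t)) := by
        calc A2 * (y / r t) = A * (c0 * (μ / 2) * (y / r t)) := by rw [hA]; field_simp
          _ ≤ _ := by
            gcongr ?_ * (?_ * _)
            nlinarith
      linarith
  set G := Real.log (1 + N tb) + A * r tb ^ (-(μ / 2))
  refine ⟨Real.exp G + 1, fun t ht => ?_⟩
  have h1 := hmono t ht
  have hr0 : 0 < r t := lt_trans one_pos (hdom t ht).1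
  have hy : 0 < r t ^ (-(μ / 2)) := Real.rpow_pos_of_pos hr0 _
  have h2 : Real.log (1 + N t) ≤ G := by nlinarith [mul_nonneg hAp hy.le]
  have h3 : 1 + N t ≤ Real.exp G := (Real.log_le_iff_le_exp (by linarith [hN0 t])).1 h2
  nlinarith [hωN t, sq_nonneg (‖ω t‖ - 1)]

lemma ham_cont {p : ℝ → (Fin m → ℝ) → ℝ → (Fin m → ℝ) → ℝ} {T₀ : ℝ}
    {r : ℝ → ℝ} {θ : ℝ → Fin m → ℝ} {ρ : ℝ → ℝ} {ω : ℝ → Fin m → ℝ}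
    (hsol : IsHamSolOn p r θ ρ ω (Iic T₀)) : ∀ t ≤ T₀,
    HasDerivAt (fun t => ((r t, θ t, ρ t, ω t) : Phase m))
      (pdRho p (r t) (θ t) (ρ t) (ω t), fun j => pdOmega p j (r t) (θ t) (ρ t) (ω t),
        -pdR p (r t) (θ t) (ρ t) (ω t), fun j => -pdTheta p j (r t) (θ t) (ρ t) (ω t)) t := by
  intro t ht
  obtain ⟨d1, d2, d3, d4⟩ := hsol t ht
  exact d1.prodMk ((hasDerivAt_pi.2 d2).prodMk (d3.prodMk (hasDerivAt_pi.2 d4)))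

lemma ref_all {c : Coeffs m μ U} (hμ : μ ∈ Ioo (0:ℝ) 1) (hU : IsOpen U) {K : Set (Fin m → ℝ)}
    (hK : IsCompact K) (hKU : K ⊆ U) {p₀ T₀ : ℝ}
    {r : ℝ → ℝ} {θ : ℝ → Fin m → ℝ} {ρ : ℝ → ℝ} {ω : ℝ → Fin m → ℝ} (hp₀ : 0 < p₀)
    (hdom : ∀ t ≤ T₀, r t ∈ Ioi (1:ℝ) ∧ θ t ∈ K)
    (hsol : IsHamSolOn c.p r θ ρ ω (Iic T₀))
    (hen : ∀ t ≤ T₀, c.p (r t) (θ t) (ρ t) (ω t) = p₀)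
    (hesc : Tendsto r atBot atTop) :
    ∃ c0 > 0, ∃ tb ≤ T₀, ∃ M > 0, ∃ rm > 1, (∀ t ≤ tb, ρ t ≤ -c0) ∧
      ∀ t ≤ T₀, |ρ t| ≤ M ∧ ‖ω t‖ ≤ M ∧ rm ≤ r t := by
  obtain ⟨C, hF⟩ := exists_FB hμ.1 hU c hK hKU
  obtain ⟨k', hk', hQ'⟩ := coercive c hK hKU
  set k := min k' 1
  have hk : 0 < k := lt_min hk' one_pos
  have hk1 : k ≤ 1 := min_le_right _ _
  have hQ : ∀ θ ∈ K, ∀ ω, k * ‖ω‖ ^ 2 ≤ QF (c.hM θ) ω := fun θ hθ ω =>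
    (mul_le_mul_of_nonneg_right (min_le_left _ _) (sq_nonneg _)).trans (hQ' θ hθ ω)
  obtain ⟨c0, hc0, tb, htb, h⟩ := ref_rho hμ.1 hF hk hk1 hQ hp₀ hdom hsol hen hesc
  have hdom' : ∀ t ≤ tb, r t ∈ Ioi (1:ℝ) ∧ θ t ∈ K := fun t ht => hdom t (ht.trans htb)
  have hsol' : IsHamSolOn c.p r θ ρ ω (Iic tb) := fun t ht => hsol t (le_trans ht htb)
  have hen' : ∀ t ≤ tb, c.p (r t) (θ t) (ρ t) (ω t) = p₀ := fun t ht => hen t (ht.trans htb)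
  have hrd : ∀ t ≤ tb, pdRho c.p (r t) (θ t) (ρ t) (ω t) ≤ -c0 := fun t ht => (h t ht).2.2
  obtain ⟨D, hD, hv⟩ := ref_v hμ hF hk hk1 hQ hp₀ hdom' hsol' hen' hc0
    (fun t ht => (h t ht).2.1) hrd
  have hρB : ∀ t ≤ tb, |ρ t| ≤ 2 * p₀ / k + 1 := fun t ht =>
    (pt_est hF hk hk1 hQ (hdom' t ht).1 (hdom' t ht).2 (hen' t ht) (h t ht).2.1).2.2.2.2.1
  obtain ⟨M1, hM1⟩ := ref_omega hμ hF hdom' hsol' hc0 (by positivity) hρB hrd hD hv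
  have hcont : ContinuousOn (fun t => ((r t, θ t, ρ t, ω t) : Phase m)) (Icc tb T₀) := fun t ht =>
    (ham_cont hsol t ht.2).continuousAt.continuousWithinAt
  have hcr : ContinuousOn r (Icc tb T₀) := continuous_fst.comp_continuousOn hcont
  have hcρ : ContinuousOn ρ (Icc tb T₀) :=
    (continuous_fst.comp (continuous_snd.comp continuous_snd)).comp_continuousOn hcont
  have hcω : ContinuousOn ω (Icc tb T₀) :=
    (continuous_snd.comp (continuous_snd.comp continuous_snd)).comp_continuousOn hcont
  obtain ⟨M2, hM2⟩ := isCompact_Icc.exists_bound_of_continuousOn hcρ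
  obtain ⟨M3, hM3⟩ := isCompact_Icc.exists_bound_of_continuousOn hcω
  obtain ⟨s, hs, hmin⟩ := isCompact_Icc.exists_isMinOn ⟨tb, left_mem_Icc.2 htb⟩ hcr
  have hanti : ∀ t ≤ tb, - r t ≤ - r tb :=
    mono_Iic (f := fun t => - r t) (f' := fun t => -pdRho c.p (r t) (θ t) (ρ t) (ω t))
      (fun t ht => (hsol' t ht).1.neg) (fun t ht => by have := hrd t ht; linarith)
  refine ⟨c0, hc0, tb, htb, |M1| + |M2| + |M3| + (2 * p₀ / k + 1), by positivity, r s,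
    (hdom s hs.2).1, fun t ht => (h t ht).1, fun t ht => ?_⟩
  have p1 := le_abs_self M1
  have p2 := le_abs_self M2
  have p3 := le_abs_self M3
  have q1 := abs_nonneg M1
  have q2 := abs_nonneg M2
  have q3 := abs_nonneg M3
  have q4 : 0 < 2 * p₀ / k + 1 := by positivity
  rcases le_total t tb with h1 | h1
  · refine ⟨(hρB t h1).trans (by linarith), (hM1 t h1).trans (by linarith), ?_⟩
    have h2 : r s ≤ r tb := hmin (left_mem_Icc.2 htb)
    have h3 := hanti t h1
    linarith
  · exact ⟨(hM2 t ⟨h1, ht⟩).trans (by linarith), (hM3 t ⟨h1, ht⟩).trans (by linarith),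
      hmin ⟨h1, ht⟩⟩

end RefOmega
section VF
variable {m : ℕ} {μ : ℝ} {U : Set (Fin m → ℝ)}

/-- the energy as a function on phase space -/
noncomputable def PP (c : Coeffs m μ U) (z : Phase m) : ℝ := c.p z.1 z.2.1 z.2.2.1 z.2.2.2

/-- the Hamiltonian vector field -/
noncomputable def HV (c : Coeffs m μ U) (z : Phase m) : Phase m :=
  (pdRho c.p z.1 z.2.1 z.2.2.1 z.2.2.2, fun j => pdOmega c.p j z.1 z.2.1 z.2.2.1 z.2.2.2,
    -pdR c.p z.1 z.2.1 z.2.2.1 z.2.2.2, fun j => -pdTheta c.p j z.1 z.2.1 z.2.2.1 z.2.2.2)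

/-- the domain -/
def Om (U : Set (Fin m → ℝ)) : Set (Phase m) := {z | 1 < z.1 ∧ z.2.1 ∈ U}

lemma isOpen_Om (hU : IsOpen U) : IsOpen (Om U) := by
  have h1 : IsOpen {z : Phase m | 1 < z.1} := isOpen_lt continuous_const continuous_fst
  have h2 : IsOpen {z : Phase m | z.2.1 ∈ U} := hU.preimage (by fun_prop)
  exact h1.inter h2

lemma PP_smooth (c : Coeffs m μ U) : ContDiffOn ℝ (⊤ : ℕ∞) (PP c) (Om U) := by
  have hmap : ∀ z ∈ Om U, ((z.1, z.2.1) : ℝ × (Fin m → ℝ)) ∈ Ioi (1:ℝ) ×ˢ U := fun z hz => ⟨hz.1, hz.2⟩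
  have hpr : ContDiffOn ℝ (⊤ : ℕ∞) (fun z : Phase m => ((z.1, z.2.1) : ℝ × (Fin m → ℝ))) (Om U) := by
    fun_prop
  have h0 : ContDiffOn ℝ (⊤ : ℕ∞) (fun z : Phase m => c.a0 z.1 z.2.1) (Om U) :=
    c.a0_smooth.comp hpr hmap
  have h1 : ∀ j, ContDiffOn ℝ (⊤ : ℕ∞) (fun z : Phase m => c.a1 z.1 z.2.1 j) (Om U) := fun j =>
    (c.a1_smooth j).comp hpr hmap
  have h2 : ∀ j k, ContDiffOn ℝ (⊤ : ℕ∞) (fun z : Phase m => c.a2 z.1 z.2.1 j k) (Om U) := fun j k =>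
    (c.a2_smooth j k).comp hpr hmap
  have hh : ∀ j k, ContDiffOn ℝ (⊤ : ℕ∞) (fun z : Phase m => c.hM z.2.1 j k) (Om U) := fun j k =>
    (c.hM_smooth j k).comp (g := fun θ => c.hM θ j k) (f := fun z : Phase m => z.2.1)
      (by fun_prop) (fun z hz => hz.2)
  have hr : ContDiffOn ℝ (⊤ : ℕ∞) (fun z : Phase m => z.1) (Om U) := by fun_prop
  have hρ : ContDiffOn ℝ (⊤ : ℕ∞) (fun z : Phase m => z.2.2.1) (Om U) := by fun_prop
  have hω : ∀ j, ContDiffOn ℝ (⊤ : ℕ∞) (fun z : Phase m => z.2.2.2 j) (Om U) := by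
    intro j; fun_prop
  have hr0 : ∀ z ∈ Om U, z.1 ≠ 0 := fun z hz => by have := hz.1; linarith
  have hr2 : ∀ z ∈ Om U, z.1 ^ 2 ≠ 0 := fun z hz => pow_ne_zero 2 (hr0 z hz)
  unfold PP Coeffs.p energy
  refine ((((hρ.pow 2).add ?_).add (h0.mul (hρ.pow 2))).add ?_).add ?_
  · exact (ContDiffOn.sum fun j _ => ContDiffOn.sum fun k _ =>
      ((hh j k).mul (hω j)).mul (hω k)).div (hr.pow 2) hr2
  · exact (ContDiffOn.sum fun j _ => ((h1 j).mul hρ).mul (hω j)).div hr hr0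
  · exact (ContDiffOn.sum fun j _ => ContDiffOn.sum fun k _ =>
      ((h2 j k).mul (hω j)).mul (hω k)).div (hr.pow 2) hr2

lemma HV_eq (hU : IsOpen U) (c : Coeffs m μ U) {z : Phase m} (hz : z ∈ Om U) :
    HV c z = (fderiv ℝ (PP c) z (0, 0, 1, 0), fun j => fderiv ℝ (PP c) z (0, 0, 0, Pi.single j 1),
      -fderiv ℝ (PP c) z (1, 0, 0, 0), fun j => -fderiv ℝ (PP c) z (0, Pi.single j 1, 0, 0)) := by
  have hd : HasFDerivAt (PP c) (fderiv ℝ (PP c) z) z :=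
    (((PP_smooth c).contDiffAt ((isOpen_Om hU).mem_nhds hz)).differentiableAt (by simp)).hasFDerivAt
  obtain ⟨r, θ, ρ, ω⟩ := z
  unfold HV
  refine Prod.ext ?_ (Prod.ext ?_ (Prod.ext ?_ ?_))
  · have h : HasDerivAt (fun s : ℝ => ((r, θ, s, ω) : Phase m)) (0, 0, 1, 0) ρ :=
      (hasDerivAt_const _ _).prodMk ((hasDerivAt_const _ _).prodMk
        ((hasDerivAt_id ρ).prodMk (hasDerivAt_const _ _)))
    exact (HasFDerivAt.comp_hasDerivAt ρ hd h).deriv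
  · funext j
    have h : HasFDerivAt (fun s => ((r, θ, ρ, s) : Phase m))
        ((0 : (Fin m → ℝ) →L[ℝ] ℝ).prod ((0 : (Fin m → ℝ) →L[ℝ] (Fin m → ℝ)).prod
        ((0 : (Fin m → ℝ) →L[ℝ] ℝ).prod (ContinuousLinearMap.id ℝ (Fin m → ℝ))))) ω :=
      (hasFDerivAt_const _ _).prodMk ((hasFDerivAt_const _ _).prodMk
        ((hasFDerivAt_const _ _).prodMk (hasFDerivAt_id ω)))
    have := (HasFDerivAt.comp ω hd h).fderiv
    exact congrArg (fun L => L (Pi.single j 1)) this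
  · have h : HasDerivAt (fun s : ℝ => ((s, θ, ρ, ω) : Phase m)) (1, 0, 0, 0) r :=
      (hasDerivAt_id r).prodMk ((hasDerivAt_const _ _).prodMk
        ((hasDerivAt_const _ _).prodMk (hasDerivAt_const _ _)))
    have := (HasFDerivAt.comp_hasDerivAt r hd h).deriv
    exact congrArg (fun x : ℝ => -x) this
  · funext j
    have h : HasFDerivAt (fun s => ((r, s, ρ, ω) : Phase m))
        ((0 : (Fin m → ℝ) →L[ℝ] ℝ).prod ((ContinuousLinearMap.id ℝ (Fin m → ℝ)).prod
        ((0 : (Fin m → ℝ) →L[ℝ] ℝ).prod (0 : (Fin m → ℝ) →L[ℝ] (Fin m → ℝ))))) θ :=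
      (hasFDerivAt_const _ _).prodMk ((hasFDerivAt_id θ).prodMk
        ((hasFDerivAt_const _ _).prodMk (hasFDerivAt_const _ _)))
    have := (HasFDerivAt.comp θ hd h).fderiv
    exact congrArg (fun L => -(L (Pi.single j 1))) this

lemma HV_smooth (hU : IsOpen U) (c : Coeffs m μ U) : ContDiffOn ℝ 1 (HV c) (Om U) := by
  have h1 : ContDiffOn ℝ 1 (fderiv ℝ (PP c)) (Om U) :=
    (PP_smooth c).fderiv_of_isOpen (isOpen_Om hU) (by
      norm_cast)
  have h2 : ∀ v : Phase m, ContDiffOn ℝ 1 (fun z => fderiv ℝ (PP c) z v) (Om U) := fun v =>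
    h1.clm_apply contDiffOn_const
  refine ContDiffOn.congr ?_ (fun z hz => HV_eq hU c hz)
  exact (h2 _).prodMk ((contDiffOn_pi.2 fun j => h2 _).prodMk ((h2 _).neg.prodMk
    (contDiffOn_pi.2 fun j => (h2 _).neg)))

lemma tail_bd (hμ : μ ∈ Ioo (0:ℝ) 1) {c : Coeffs m μ U} {K : Set (Fin m → ℝ)} {C W : ℝ}
    (hF : FB c K C) (hW : 0 < W) {z : Phase m} (hr : 1 < z.1) (hθ : z.2.1 ∈ K)
    (hρ : |z.2.2.1| ≤ W) (hω : ‖z.2.2.2‖ ≤ W) :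
    ‖(HV c z).2‖ ≤ C * (2 * W + 4 * W ^ 2) * z.1 ^ (-1 - μ) ∧
      |(HV c z).1 - 2 * z.2.2.1| ≤ 2 * C * W * z.1 ^ (-μ) := by
  obtain ⟨r, θ, ρ, ω⟩ := z
  simp only at hr hθ hρ hω ⊢
  have hC := hF.pos
  have hr0 : 0 < r := by linarith
  have hx : 0 < r ^ (-μ) := Real.rpow_pos_of_pos hr0 _
  have hx1 : r ^ (-1 - μ) = r ^ (-μ) / r := by
    rw [show -1 - μ = -μ - 1 by ring, Real.rpow_sub hr0]; simp
  have hxr : 1 / r ≤ r ^ (-μ) := by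
    rw [one_div, ← Real.rpow_neg_one]
    exact Real.rpow_le_rpow_of_exponent_le hr.le (by linarith [hμ.2])
  rw [hx1]
  have b1 := hF.b1 r hr θ hθ ρ ω
  have b2 := hF.b2 r hr θ hθ ρ ω
  have b3 := hF.b3 r hr θ hθ ρ ω
  have b4 := hF.b4 r hr θ hθ ρ ω
  have b6 := hF.b6 θ hθ ω
  set x := r ^ (-μ)
  have hv : ‖ω‖ / r ≤ W := (div_le_self (norm_nonneg _) hr.le).trans hω
  have hρ2 : ρ ^ 2 ≤ W ^ 2 := by rw [← sq_abs]; gcongr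
  have hy : 0 < x / r := by positivity
  have hyy : 1 / r ^ 2 ≤ x / r := by
    rw [show 1 / r ^ 2 = (1 / r) / r by field_simp]; gcongr
  have hCW : 0 ≤ C * W := by positivity
  have hCWW : 0 ≤ C * W ^ 2 := by positivity
  constructor
  · refine max_le ?_ (max_le ?_ ?_)
    · refine (pi_norm_le_iff_of_nonneg (by positivity)).2 fun j => ?_
      calc _ ≤ C * (‖ω‖ / r ^ 2 + x / r * |ρ|) := b2 j
        _ ≤ C * (W / r ^ 2 + x / r * W) := by gcongr
        _ = C * (W * (1 / r ^ 2) + x / r * W) := by ring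
        _ ≤ C * (W * (x / r) + x / r * W) := by gcongr
        _ = C * (2 * W + 0) * (x / r) := by ring
        _ ≤ _ := by gcongr; positivity
    · change ‖-pdR c.p r θ ρ ω‖ ≤ _
      rw [norm_neg, Real.norm_eq_abs]
      have e : pdR c.p r θ ρ ω = (pdR c.p r θ ρ ω + 2 * QF (c.hM θ) ω / r ^ 3)
        - 2 * QF (c.hM θ) ω / r ^ 3 := by ring
      rw [e]
      have h2 : |2 * QF (c.hM θ) ω / r ^ 3| ≤ 2 * (C * W ^ 2) * (x / r) := by
        rw [abs_div, abs_mul, abs_two, abs_of_pos (pow_pos hr0 3)]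
        calc _ ≤ 2 * (C * W ^ 2) / r ^ 3 := by
              gcongr; exact b6.trans (by gcongr)
          _ ≤ 2 * (C * W ^ 2) / r ^ 2 := by
              gcongr
              · exact hr.le
              · norm_num
          _ = 2 * (C * W ^ 2) * (1 / r ^ 2) := by ring
          _ ≤ _ := by gcongr
      calc _ ≤ C * (x / r) * (ρ ^ 2 + (‖ω‖ / r) ^ 2) + 2 * (C * W ^ 2) * (x / r) :=
            (abs_sub _ _).trans (add_le_add b3 h2)
        _ ≤ C * (x / r) * (W ^ 2 + W ^ 2) + 2 * (C * W ^ 2) * (x / r) := by gcongr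
        _ = C * (0 + 4 * W ^ 2) * (x / r) := by ring
        _ ≤ _ := by gcongr; positivity
    · refine (pi_norm_le_iff_of_nonneg (by positivity)).2 fun j => ?_
      change ‖-pdTheta c.p j r θ ρ ω‖ ≤ _
      rw [norm_neg, Real.norm_eq_abs]
      calc _ ≤ C * ((‖ω‖ / r) ^ 2 + x / r * (ρ ^ 2 + |ρ| * ‖ω‖)) := b4 j
        _ ≤ C * ((W / r) ^ 2 + x / r * (W ^ 2 + W * W)) := by gcongr
        _ = C * (W ^ 2 * (1 / r ^ 2) + x / r * (W ^ 2 + W * W)) := by ring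
        _ ≤ C * (W ^ 2 * (x / r) + x / r * (W ^ 2 + W * W)) := by gcongr
        _ = C * (0 + 3 * W ^ 2) * (x / r) := by ring
        _ ≤ _ := by gcongr; positivity; norm_num
  · calc _ ≤ C * x * (|ρ| + ‖ω‖ / r) := b1
      _ ≤ C * x * (W + W) := by gcongr
      _ = _ := by ring

lemma isClosed_box {K : Set (Fin m → ℝ)} (hK : IsClosed K) {a b d : ℝ} :
    IsClosed {z : Phase m | a ≤ z.1 ∧ z.2.1 ∈ K ∧ |z.2.2.1| ≤ b ∧ ‖z.2.2.2‖ ≤ d} := by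
  have h1 : IsClosed {z : Phase m | a ≤ z.1} := isClosed_le (by fun_prop) (by fun_prop)
  have h2 : IsClosed {z : Phase m | z.2.1 ∈ K} := hK.preimage (by fun_prop)
  have h3 : IsClosed {z : Phase m | |z.2.2.1| ≤ b} := isClosed_le (by fun_prop) (by fun_prop)
  have h4 : IsClosed {z : Phase m | ‖z.2.2.2‖ ≤ d} := isClosed_le (by fun_prop) (by fun_prop)
  exact h1.inter (h2.inter (h3.inter h4))

lemma isOpen_box {K : Set (Fin m → ℝ)} (hK : IsOpen K) {a b d : ℝ} :
    IsOpen {z : Phase m | a < z.1 ∧ z.2.1 ∈ K ∧ |z.2.2.1| < b ∧ ‖z.2.2.2‖ < d} := by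
  have h1 : IsOpen {z : Phase m | a < z.1} := isOpen_lt (by fun_prop) (by fun_prop)
  have h2 : IsOpen {z : Phase m | z.2.1 ∈ K} := hK.preimage (by fun_prop)
  have h3 : IsOpen {z : Phase m | |z.2.2.1| < b} := isOpen_lt (by fun_prop) (by fun_prop)
  have h4 : IsOpen {z : Phase m | ‖z.2.2.2‖ < d} := isOpen_lt (by fun_prop) (by fun_prop)
  exact h1.inter (h2.inter (h3.inter h4))

open scoped Manifold ContDiff in
lemma cutoff (hμ : μ ∈ Ioo (0:ℝ) 1) (hU : IsOpen U) (c : Coeffs m μ U) {K1 K2 : Set (Fin m → ℝ)}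
    (hK1 : IsClosed K1) (h12 : K1 ⊆ interior K2) (hK2 : IsCompact K2) (hK2U : K2 ⊆ U)
    {ra rb M : ℝ} (hrb : 1 < rb) (hab : rb < ra) (hM : 0 < M) :
    ∃ G : Phase m → Phase m, ContDiff ℝ 1 G ∧ (∃ B, ∀ z, ‖G z‖ ≤ B) ∧
      ∀ z : Phase m, ra ≤ z.1 → z.2.1 ∈ K1 → |z.2.2.1| ≤ M → ‖z.2.2.2‖ ≤ M → G z = HV c z := by
  obtain ⟨C, hF⟩ := exists_FB hμ.1 hU c hK2 hK2U
  have hC := hF.pos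
  set s : Set (Phase m) := {z | ra ≤ z.1 ∧ z.2.1 ∈ K1 ∧ |z.2.2.1| ≤ M ∧ ‖z.2.2.2‖ ≤ M} with hs
  set t : Set (Phase m) :=
    {z | rb ≤ z.1 ∧ z.2.1 ∈ K2 ∧ |z.2.2.1| ≤ M + 1 ∧ ‖z.2.2.2‖ ≤ M + 1} with ht
  have hsc : IsClosed s := isClosed_box hK1
  have htc : IsClosed t := isClosed_box hK2.isClosed
  have hint : IsOpen {z : Phase m | rb < z.1 ∧ z.2.1 ∈ interior K2 ∧ |z.2.2.1| < M + 1 ∧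
      ‖z.2.2.2‖ < M + 1} := isOpen_box isOpen_interior
  have hst : s ⊆ interior t := by
    intro z hz
    refine interior_maximal (fun w hw => ?_) hint ⟨lt_of_lt_of_le hab hz.1, h12 hz.2.1,
      lt_of_le_of_lt hz.2.2.1 (by linarith), lt_of_le_of_lt hz.2.2.2 (by linarith)⟩
    exact ⟨hw.1.le, interior_subset hw.2.1, hw.2.2.1.le, hw.2.2.2.le⟩
  obtain ⟨χ, h1, h0, h01⟩ :=
    exists_contMDiffMap_one_nhds_of_subset_interior (n := 1) 𝓘(ℝ, Phase m) hsc hst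
  have hχ : ContDiff ℝ 1 (χ : Phase m → ℝ) := by
    have := χ.contMDiff.contDiff
    exact this
  have htO : t ⊆ Om U := fun z hz => ⟨lt_of_lt_of_le hrb hz.1, hK2U hz.2.1⟩
  refine ⟨fun z => χ z • HV c z, ?_, ?_, ?_⟩
  · rw [contDiff_iff_contDiffAt]
    intro z
    by_cases hz : z ∈ Om U
    · exact hχ.contDiffAt.smul ((HV_smooth hU c).contDiffAt ((isOpen_Om hU).mem_nhds hz))
    · have hzt : z ∉ t := fun h => hz (htO h)
      have : (fun z => χ z • HV c z) =ᶠ[𝓝 z] fun _ => (0 : Phase m) := by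
        filter_upwards [htc.isOpen_compl.mem_nhds hzt] with w hw
        rw [h0 w hw, zero_smul]
      exact contDiffAt_const.congr_of_eventuallyEq this
  · set W := M + 1
    have hW : 0 < W := by positivity
    refine ⟨C * (2 * W + 4 * W ^ 2) + (2 * C * W + 2 * W), fun z => ?_⟩
    by_cases hz : z ∈ t
    · obtain ⟨z1, z2, z3, z4⟩ := hz
      have hz1 : 1 < z.1 := lt_of_lt_of_le hrb z1
      obtain ⟨b1, b2⟩ := tail_bd hμ hF hW hz1 z2 z3 z4
      have x1 : z.1 ^ (-1 - μ) ≤ 1 :=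
        Real.rpow_le_one_of_one_le_of_nonpos hz1.le (by linarith [hμ.1])
      have x2 : z.1 ^ (-μ) ≤ 1 :=
        Real.rpow_le_one_of_one_le_of_nonpos hz1.le (by linarith [hμ.1])
      have b1' : ‖(HV c z).2‖ ≤ C * (2 * W + 4 * W ^ 2) :=
        b1.trans (mul_le_of_le_one_right (by positivity) x1)
      have b2' : |(HV c z).1 - 2 * z.2.2.1| ≤ 2 * C * W :=
        b2.trans (mul_le_of_le_one_right (by positivity) x2)
      have b3' : ‖(HV c z).1‖ ≤ 2 * C * W + 2 * W := by
        rw [Real.norm_eq_abs]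
        calc |(HV c z).1| = |((HV c z).1 - 2 * z.2.2.1) + 2 * z.2.2.1| := by congr 1; ring
          _ ≤ 2 * C * W + 2 * W := by
            refine (abs_add_le _ _).trans (add_le_add b2' ?_)
            rw [abs_mul, abs_two]; gcongr
      rw [norm_smul, Real.norm_eq_abs, abs_of_nonneg (h01 z).1]
      refine (mul_le_of_le_one_left (norm_nonneg _) (h01 z).2).trans ?_
      have p1 : 0 ≤ C * (2 * W + 4 * W ^ 2) := by positivity
      have p2 : 0 ≤ 2 * C * W + 2 * W := by positivity
      exact max_le (b3'.trans (by linarith)) (b1'.trans (by linarith))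
    · simp only [h0 z hz, zero_smul, norm_zero]
      positivity
  · intro z a1 a2 a3 a4
    have : χ z = 1 := h1.self_of_nhdsSet z ⟨a1, a2, a3, a4⟩
    simp only [this, one_smul]

end VF
/-- Lemma 2.1, local uniformity. The escape estimate holds, with a
uniform constant, for all initial conditions in a neighborhood of a backward nontrapped
point; in particular the backward solutions from that neighborhood exist for all `t ≤ T₀`
and are backward nontrapped. -/
theorem statement_5 {m : ℕ} (hm : 1 ≤ m) {μ : ℝ} (hμ : μ ∈ Ioo (0:ℝ) 1)
    {U : Set (Fin m → ℝ)} (hU : IsOpen U) (c : Coeffs m μ U)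
    (K : Set (Fin m → ℝ)) (hK : IsCompact K) (hKU : K ⊆ U) (T₀ : ℝ)
    (r₀ : ℝ) (θ₀ : Fin m → ℝ) (ρ₀ : ℝ) (ω₀ : Fin m → ℝ)
    (r : ℝ → ℝ) (θ : ℝ → Fin m → ℝ) (ρ : ℝ → ℝ) (ω : ℝ → Fin m → ℝ)
    (p₀ : ℝ) (hp₀ : 0 < p₀)
    (hinit : r T₀ = r₀ ∧ θ T₀ = θ₀ ∧ ρ T₀ = ρ₀ ∧ ω T₀ = ω₀)
    (hdom : ∀ t ≤ T₀, r t ∈ Ioi (1:ℝ) ∧ θ t ∈ K)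
    (hsol : IsHamSolOn c.p r θ ρ ω (Iic T₀))
    (hen : ∀ t ≤ T₀, c.p (r t) (θ t) (ρ t) (ω t) = p₀)
    (hesc : Tendsto r atBot atTop) :
    ∃ V ∈ 𝓝 ((r₀, θ₀, ρ₀, ω₀) : Phase m), ∃ C > (0:ℝ),
      ∀ z ∈ V, ∃ (r' : ℝ → ℝ) (θ' : ℝ → Fin m → ℝ) (ρ' : ℝ → ℝ) (ω' : ℝ → Fin m → ℝ),
        ((r' T₀, θ' T₀, ρ' T₀, ω' T₀) : Phase m) = z ∧
        (∀ t ≤ T₀, r' t ∈ Ioi (1:ℝ) ∧ θ' t ∈ U) ∧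
        IsHamSolOn c.p r' θ' ρ' ω' (Iic T₀) ∧
        (∀ t < -C, r' t > C⁻¹ * |t| - C) ∧
        Tendsto r' atBot atTop := by
  obtain ⟨rfl, rfl, rfl, rfl⟩ := hinit
  obtain ⟨c0, hc0, tb, htb, M, hM, rm, hrm, hρneg, hbd⟩ :=
    ref_all hμ hU hK hKU hp₀ hdom hsol hen hesc
  obtain ⟨δ, hδ, hδU⟩ := hK.exists_cthickening_subset_open hU hKU
  have hK2 : IsCompact (Metric.cthickening δ K) := hK.cthickening
  have hK12 : Metric.cthickening (δ / 2) K ⊆ interior (Metric.cthickening δ K) :=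
    (Metric.cthickening_subset_thickening' hδ (by linarith) K).trans
      (Metric.thickening_subset_interior_cthickening δ K)
  obtain ⟨G, hG, ⟨B, hB⟩, hGH⟩ := cutoff (ra := (1 + rm) / 2) (rb := (1 + (1 + rm) / 2) / 2)
    (M := M + 1) hμ hU c Metric.isClosed_cthickening hK12 hK2 hδU (by linarith) (by linarith)
    (by linarith)
  obtain ⟨C, hF⟩ := exists_FB hμ.1 hU c hK2 hδU
  have hC := hF.pos
  set ra := (1 + rm) / 2 with hra
  have hra1 : 1 < ra := by linarith
  have hrarm : ra < rm := by linarith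
  set W := M + 1 with hW
  have hWp : 0 < W := by linarith
  set A := C * (2 * W + 4 * W ^ 2) with hA
  have hAp : 0 < A := by positivity
  set Y : ℝ → Phase m := fun t => (r t, θ t, ρ t, ω t) with hY
  obtain ⟨η, hη, hη1, hη2, hη3⟩ : ∃ η > 0, 2 * η ≤ δ / 2 ∧ 2 * η ≤ 1 ∧ 2 * η ≤ c0 / 2 := by
    refine ⟨min (δ / 4) (min (1 / 2) (c0 / 4)), by positivity, ?_, ?_, ?_⟩
    · linarith [min_le_left (δ / 4) (min (1 / 2) (c0 / 4))]
    · linarith [min_le_right (δ / 4) (min (1 / 2) (c0 / 4)), min_le_left (1 / 2) (c0 / 4)]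
    · linarith [min_le_right (δ / 4) (min (1 / 2) (c0 / 4)), min_le_right (1 / 2) (c0 / 4)]
  -- points near the reference trajectory
  have hin : ∀ (z : Phase m) (t : ℝ), t ≤ T₀ → ‖z.2 - (Y t).2‖ ≤ 2 * η →
      z.2.1 ∈ Metric.cthickening (δ / 2) K ∧ |z.2.2.1| ≤ W ∧ ‖z.2.2.2‖ ≤ W ∧
      z.2.2.1 ≤ ρ t + 2 * η := by
    intro z t ht hz
    have n1 : ‖z.2.1 - θ t‖ ≤ 2 * η := (norm_fst_le (z.2 - (Y t).2)).trans hz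
    have n2 : ‖z.2.2.1 - ρ t‖ ≤ 2 * η :=
      (norm_fst_le (z.2 - (Y t).2).2).trans ((norm_snd_le (z.2 - (Y t).2)).trans hz)
    have n3 : ‖z.2.2.2 - ω t‖ ≤ 2 * η :=
      (norm_snd_le (z.2 - (Y t).2).2).trans ((norm_snd_le (z.2 - (Y t).2)).trans hz)
    obtain ⟨m1, m2, -⟩ := hbd t ht
    refine ⟨?_, ?_, ?_, ?_⟩
    · refine Metric.mem_cthickening_of_dist_le _ (θ t) _ _ (hdom t ht).2 ?_
      rw [dist_eq_norm]; linarith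
    · rw [Real.norm_eq_abs] at n2
      have := abs_sub_abs_le_abs_sub z.2.2.1 (ρ t)
      linarith
    · have := norm_sub_norm_le z.2.2.2 (ω t)
      linarith
    · rw [Real.norm_eq_abs] at n2
      have := le_abs_self (z.2.2.1 - ρ t)
      linarith
  have hGin : ∀ (z : Phase m) (t : ℝ), t ≤ T₀ → ra ≤ z.1 → ‖z.2 - (Y t).2‖ ≤ 2 * η →
      G z = HV c z := by
    intro z t ht h1 h2
    obtain ⟨a1, a2, a3, -⟩ := hin z t ht h2
    exact hGH z h1 a1 a2 a3
  have hYG : ∀ t ≤ T₀, HasDerivAt Y (G (Y t)) t := by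
    intro t ht
    rw [hGin (Y t) t ht (hrarm.le.trans (hbd t ht).2.2) (by simp; positivity)]
    exact ham_cont hsol t ht
  -- choice of radii and of the matching time
  have hsm : ∀ ε : ℝ, 0 < ε → ∀ᶠ R : ℝ in atTop, R ^ (-μ) < ε := fun ε hε =>
    (tendsto_rpow_neg_atTop hμ.1).eventually (gt_mem_nhds hε)
  obtain ⟨R0, hR0s, hR0a⟩ := ((hsm (c0 / 2 / (2 * C * W)) (by positivity)).and
    (eventually_ge_atTop ra)).exists
  have hR0p : 0 < R0 := by linarith
  have hμ0 := hμ.1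
  obtain ⟨R1, hR1s, hR1a⟩ := ((hsm (η / (A / (μ * (c0 / 2)))) (by positivity)).and
    (eventually_gt_atTop R0)).exists
  obtain ⟨t1, ht1r, ht1b⟩ := ((hesc.eventually (eventually_ge_atTop (R1 + 1))).and
    (eventually_le_atBot tb)).exists
  have ht1T : t1 ≤ T₀ := ht1b.trans htb
  obtain ⟨d, hd, hdep⟩ := cont_dep hG hB ht1T hYG (ε := min η (rm - ra))
    (lt_min hη (by linarith))
  have hc : 0 < c0 / 2 := by positivity
  set Cc : ℝ := (c0 / 2)⁻¹ + |t1| + c0 / 2 * |t1| with hCc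
  have hCcp : 0 < Cc := by positivity
  refine ⟨Metric.ball (Y T₀) d, Metric.ball_mem_nhds _ hd, Cc, hCcp, fun z hz => ?_⟩
  obtain ⟨Z, hZ0, hZ⟩ := global_sol hG hB T₀ z
  have hclose := hdep Z hZ (by rw [hZ0, ← dist_eq_norm]; exact hz)
  have hcl2 : ∀ t ∈ Icc t1 T₀, ra ≤ (Z t).1 ∧ ‖(Z t).2 - (Y t).2‖ < η ∧ r t - η ≤ (Z t).1 := by
    intro t ht
    have h1 := hclose t ht
    have h2 : ‖(Z t).1 - r t‖ < min η (rm - ra) := lt_of_le_of_lt (norm_fst_le (Z t - Y t)) h1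
    have h3 : ‖(Z t).2 - (Y t).2‖ < min η (rm - ra) := lt_of_le_of_lt (norm_snd_le (Z t - Y t)) h1
    rw [Real.norm_eq_abs] at h2
    have h4 := (abs_lt.1 h2).1
    have h5 := (hbd t ht.2).2.2
    have h6 := min_le_left η (rm - ra)
    have h7 := min_le_right η (rm - ra)
    exact ⟨by linarith, by linarith, by linarith⟩
  have ht1m : t1 ∈ Icc t1 T₀ := ⟨le_rfl, ht1T⟩
  obtain ⟨e1, e2, e3⟩ := hcl2 t1 ht1m
  have hdr : ∀ t, HasDerivAt (fun t => (Z t).1) (G (Z t)).1 t := fun t => (hZ t).fst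
  have hdy : ∀ t, HasDerivAt (fun t => (Z t).2) (G (Z t)).2 t := fun t => (hZ t).snd
  have htr : ∀ (z : Phase m), ‖z.2 - (Z t1).2‖ ≤ η → ‖z.2 - (Y t1).2‖ ≤ 2 * η := by
    intro z hz
    have := norm_sub_le_norm_sub_add_norm_sub z.2 (Z t1).2 (Y t1).2
    linarith
  have htail := tail_trap (R0 := R0) (R1 := R1) (η := η) (C := A) (t1 := t1) hμ.1 hc hAp hR0p hR1a
    (by rw [mul_comm]; exact (lt_div_iff₀ (by positivity)).1 hR1s) hdr hdy
    (by show R1 ≤ (Z t1).1; linarith) (by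
      intro t ht g1 g2
      have g3 := htr (Z t) g2
      have g1' : ra ≤ (Z t).1 := hR0a.trans g1
      rw [hGin (Z t) t1 ht1T g1' g3]
      obtain ⟨a1, a2, a3, a4⟩ := hin (Z t) t1 ht1T g3
      obtain ⟨q1, q2⟩ := tail_bd hμ hF hWp (lt_of_lt_of_le hra1 g1')
        (interior_subset (hK12 a1)) a2 a3
      refine ⟨?_, q1⟩
      have hpow : (Z t).1 ^ (-μ) ≤ R0 ^ (-μ) :=
        Real.rpow_le_rpow_of_nonpos hR0p g1 (by linarith)
      have hs : 2 * C * W * (Z t).1 ^ (-μ) ≤ c0 / 2 := by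
        calc _ ≤ 2 * C * W * (c0 / 2 / (2 * C * W)) := by gcongr; linarith
          _ = _ := by field_simp
      have := (abs_le.1 q2).2
      have h9 := hρneg t1 ht1b
      linarith)
  have hall : ∀ t ≤ T₀, ra ≤ (Z t).1 ∧ (Z t).2.1 ∈ U ∧ G (Z t) = HV c (Z t) := by
    intro t ht
    have : ra ≤ (Z t).1 ∧ ∃ s ≤ T₀, ‖(Z t).2 - (Y s).2‖ ≤ 2 * η := by
      rcases le_total t t1 with h | h
      · obtain ⟨a1, a2⟩ := htail t h
        refine ⟨?_, t1, ht1T, htr _ a2.le⟩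
        have : 0 ≤ c0 / 2 * (t1 - t) := mul_nonneg hc.le (by linarith)
        linarith
      · obtain ⟨a1, a2, -⟩ := hcl2 t ⟨h, ht⟩
        exact ⟨a1, t, ht, by linarith⟩
    obtain ⟨a1, s, hs, a2⟩ := this
    exact ⟨a1, hδU (interior_subset (hK12 (hin _ s hs a2).1)), hGin _ s hs a1 a2⟩
  refine ⟨fun t => (Z t).1, fun t => (Z t).2.1, fun t => (Z t).2.2.1, fun t => (Z t).2.2.2,
    hZ0, fun t ht => ⟨lt_of_lt_of_le hra1 (hall t ht).1, (hall t ht).2.1⟩, ?_, ?_, ?_⟩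
  · intro t ht
    have h := hZ t
    rw [(hall t ht).2.2] at h
    exact ⟨h.fst, hasDerivAt_pi.1 h.snd.fst, h.snd.snd.fst, hasDerivAt_pi.1 h.snd.snd.snd⟩
  · intro t ht
    have q0 := neg_abs_le t1
    have q1 := abs_nonneg t1
    have q2 : 0 < (c0 / 2)⁻¹ := by positivity
    have q3 : 0 ≤ c0 / 2 * |t1| := by positivity
    have htt : t ≤ t1 := by linarith
    obtain ⟨a1, -⟩ := htail t htt
    have habs : |t| = -t := abs_of_nonpos (by linarith)
    have hinv : Cc⁻¹ ≤ c0 / 2 := by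
      rw [inv_le_comm₀ hCcp hc]; linarith
    have h1 : Cc⁻¹ * |t| ≤ c0 / 2 * |t| := by gcongr
    have h2 : c0 / 2 * (-|t1|) ≤ c0 / 2 * t1 := by gcongr
    rw [habs] at h1 ⊢
    show Cc⁻¹ * -t - Cc < (Z t).1
    linarith
  · have hlim : Tendsto (fun t : ℝ => ((Z t1).1 + c0 / 2 * t1) + c0 / 2 * (-t)) atBot atTop :=
      tendsto_atTop_add_const_left _ _ (tendsto_neg_atBot_atTop.const_mul_atTop hc)
    refine tendsto_atTop_mono' _ ?_ hlim
    filter_upwards [eventually_le_atBot t1] with t ht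
    have := (htail t ht).1
    linarith

end Scattering
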